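/- arXiv:1610.04206 — 3 statements merged into one kernel-verified Lean document; each statement's English description precedes it below -/
import Mathlib

section
/- Let λ = (λ₁, λ₂, 2^{h₂−2}, 1^{h₁−h₂}) be a partition of size n with λ₁ ≥ λ₂ ≥ 2 and h₁ ≥ h₂ ≥ 2, of Durfee size two. For h₁ ≤ m ≤ n−(λ₁−1), the number of quasi-Yamanouchi tableaux of shape λ with maximum entry exactly m equals ((λ₁−λ₂+1)/(m−h₂+1))·C(λ₁+h₁−2, m−h₂)·C(λ₂+h₁−3, m−h₂)·C(m−h₂, m−h₁)·C(λ₂+h₂−4, h₂−2)·C(λ₁+h₂−3, h₂−2)/C(h₁−1, h₂−2). -/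
open YoungDiagram

/-- Entries of `T` are all `< m`.  Entries are 0-based: the value `v` represents the
positive integer `v + 1`, so this says all (1-based) entries are at most `m`. -/
def EntryLE (μ : YoungDiagram) (T : SemistandardYoungTableau μ) (m : ℕ) : Prop :=
  ∀ i j : ℕ, (i, j) ∈ μ → T i j < m

/-- `T` is quasi-Yamanouchi: whenever a value `v > 0` appears, the leftmost
occurrence of `v` is weakly left of some occurrence of `v - 1`; equivalently some
occurrence of `v` is weakly left of some occurrence of `v - 1`. -/
def IsQY (μ : YoungDiagram) (T : SemistandardYoungTableau μ) : Prop :=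
  ∀ v : ℕ, 0 < v → (∃ i j : ℕ, (i, j) ∈ μ ∧ T i j = v) →
    ∃ i j i' j' : ℕ, (i, j) ∈ μ ∧ (i', j') ∈ μ ∧ T i j = v ∧ T i' j' = v - 1 ∧ j ≤ j'

/-- The maximum (1-based) entry of `T` is exactly `m`: all entries are `< m`
(0-based) and the value `m - 1` appears. -/
def MaxEq (μ : YoungDiagram) (T : SemistandardYoungTableau μ) (m : ℕ) : Prop :=
  EntryLE μ T m ∧ ∃ i j : ℕ, (i, j) ∈ μ ∧ T i j = m - 1

/-- The number of quasi-Yamanouchi tableaux of shape `μ` with maximum entry exactly `m`. -/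
noncomputable def QYTeq (μ : YoungDiagram) (m : ℕ) : ℕ :=
  Nat.card {T : SemistandardYoungTableau μ // IsQY μ T ∧ MaxEq μ T m}

/-- The number of semistandard Young tableaux of shape `μ` with entries at most `m`. -/
noncomputable def SSYTle (μ : YoungDiagram) (m : ℕ) : ℕ :=
  Nat.card {T : SemistandardYoungTableau μ // EntryLE μ T m}

/-- `T` is a standard Young tableau: each of the values `0, …, μ.card - 1`
(representing `1, …, n`) appears exactly once. -/
def IsSYT (μ : YoungDiagram) (T : SemistandardYoungTableau μ) : Prop :=
  ∀ v : ℕ, v < μ.card → ∃! p : ℕ × ℕ, p ∈ μ ∧ T p.1 p.2 = v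

/-- The number of standard Young tableaux of shape `μ`. -/
noncomputable def SYTcount (μ : YoungDiagram) : ℕ :=
  Nat.card {T : SemistandardYoungTableau μ // IsSYT μ T}

/-- The descent set of a standard tableau, in the paper's 1-based labelling:
`d ∈ Des T` iff `1 ≤ d ≤ n - 1` and the (1-based) entry `d + 1` (0-based value `d`)
appears weakly left of the (1-based) entry `d` (0-based value `d - 1`). -/
def Des (μ : YoungDiagram) (T : SemistandardYoungTableau μ) : Set ℕ :=
  {d | 1 ≤ d ∧ d ≤ μ.card - 1 ∧
    ∃ i j i' j' : ℕ, (i, j) ∈ μ ∧ (i', j') ∈ μ ∧ T i j = d ∧ T i' j' = d - 1 ∧ j ≤ j'}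

/-- One destandardization step at value `v`: every occurrence of `v` lies strictly
right of every occurrence of `v - 1` (in particular vacuously if no `v - 1` appears),
and `T'` is obtained from `T` by decrementing every entry equal to `v` to `v - 1`. -/
def StepAt (μ : YoungDiagram) (T T' : SemistandardYoungTableau μ) (v : ℕ) : Prop :=
  0 < v ∧ (∃ i j : ℕ, (i, j) ∈ μ ∧ T i j = v) ∧
    (∀ i j i' j' : ℕ, (i, j) ∈ μ → (i', j') ∈ μ → T i j = v → T i' j' = v - 1 → j' < j) ∧
    (∀ i j : ℕ, (i, j) ∈ μ → T' i j = if T i j = v then v - 1 else T i j)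

/-- One destandardization step (at some value). -/
def Step (μ : YoungDiagram) (T T' : SemistandardYoungTableau μ) : Prop :=
  ∃ v : ℕ, StepAt μ T T' v

/-- `Q` is the destandardization of `T`: it is reachable from `T` by destandardization
steps and no further step applies to it. -/
def IsDst (μ : YoungDiagram) (T Q : SemistandardYoungTableau μ) : Prop :=
  Relation.ReflTransGen (Step μ) T Q ∧ ∀ Q' : SemistandardYoungTableau μ, ¬ Step μ Q Q'

/-- The hook length of the box in row `i`, column `j` of `μ`. -/
def hookLength (μ : YoungDiagram) (i j : ℕ) : ℕ :=
  (μ.rowLen i - j) + (μ.colLen j - i) - 1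

/-- The hook-content product `∏_{u ∈ μ} (k + c(u)) / h(u)` where `c(u)` is the
content (column minus row) and `h(u)` the hook length. -/
noncomputable def hookContent (μ : YoungDiagram) (k : ℕ) : ℚ :=
  ∏ c ∈ μ.cells, ((k : ℚ) + (c.2 : ℚ) - (c.1 : ℚ)) / (hookLength μ c.1 c.2 : ℚ)

/-- `μ` is the partition `(l1, l2, 2^{h2-2}, 1^{h1-h2})`: first row `l1`, second row
`l2`, rows `2, …, h2 - 1` of length `2`, rows `h2, …, h1 - 1` of length `1`, and no
other rows; so the first column has height `h1` and the second column height `h2`. -/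
def HasRows2 (μ : YoungDiagram) (l1 l2 h1 h2 : ℕ) : Prop :=
  μ.rowLen 0 = l1 ∧ μ.rowLen 1 = l2 ∧
    (∀ i : ℕ, 2 ≤ i → i < h2 → μ.rowLen i = 2) ∧
    (∀ i : ℕ, h2 ≤ i → i < h1 → μ.rowLen i = 1) ∧
    (∀ i : ℕ, h1 ≤ i → μ.rowLen i = 0)

/-- The product formula of the main theorem. -/
noncomputable def qytFormula (l1 l2 h1 h2 m : ℕ) : ℚ :=
  ((l1 - l2 + 1 : ℕ) : ℚ) / ((m - h2 + 1 : ℕ) : ℚ) *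
    ((l1 + h1 - 2).choose (m - h2) : ℚ) * ((l2 + h1 - 3).choose (m - h2) : ℚ) *
    ((m - h2).choose (m - h1) : ℚ) * ((l2 + h2 - 4).choose (h2 - 2) : ℚ) *
    ((l1 + h2 - 3).choose (h2 - 2) : ℚ) / (((h1 - 1).choose (h2 - 2) : ℕ) : ℚ)

namespace QYaux

/-- `T` is quasi-Yamanouchi with largest (0-based) entry `M`. -/
def Mx (μ : YoungDiagram) (M : ℤ) (T : SemistandardYoungTableau μ) : Prop :=
  IsQY μ T ∧ (∀ i j : ℕ, (i, j) ∈ μ → (T i j : ℤ) ≤ M) ∧ ∃ i j : ℕ, (i, j) ∈ μ ∧ (T i j : ℤ) = M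

def GS (μ : YoungDiagram) (M : ℤ) : Set (SemistandardYoungTableau μ) := {T | Mx μ M T}

def BS (μ : YoungDiagram) (M : ℤ) (c : ℕ) : Set (SemistandardYoungTableau μ) :=
  {T | Mx μ M T ∧ ∀ i j : ℕ, (i, j) ∈ μ → (T i j : ℤ) = M → j < c}

def AS (μ : YoungDiagram) (M : ℤ) (c : ℕ) : Set (SemistandardYoungTableau μ) :=
  {T | Mx μ M T ∧ (∃ i : ℕ, (i, c) ∈ μ ∧ (T i c : ℤ) = M) ∧
    ∀ i j : ℕ, (i, j) ∈ μ → (T i j : ℤ) = M → j ≤ c}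

noncomputable def G (μ : YoungDiagram) (M : ℤ) : ℚ := ((GS μ M).ncard : ℚ)
noncomputable def B (μ : YoungDiagram) (M : ℤ) (c : ℕ) : ℚ := ((BS μ M c).ncard : ℚ)
noncomputable def A (μ : YoungDiagram) (M : ℤ) (c : ℕ) : ℚ := ((AS μ M c).ncard : ℚ)

lemma GS_finite (μ : YoungDiagram) (M : ℤ) : (GS μ M).Finite := by
  have : Finite {T // T ∈ GS μ M} := by
    let f : {T // T ∈ GS μ M} → (μ.cells → Fin (M.toNat + 1)) := fun T c =>
      ⟨T.1 c.1.1 c.1.2, by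
        have := T.2.2.1 c.1.1 c.1.2 c.2
        omega⟩
    apply Finite.of_injective f
    intro T T' h
    apply Subtype.ext
    apply SemistandardYoungTableau.ext
    intro i j
    by_cases hij : (i, j) ∈ μ
    · have := congrFun h ⟨(i, j), hij⟩
      simpa [f] using this
    · rw [T.1.zeros hij, T'.1.zeros hij]
  exact Set.toFinite _

lemma BS_sub (μ M c) : BS μ M c ⊆ GS μ M := fun _ h => h.1
lemma AS_sub (μ M c) : AS μ M c ⊆ GS μ M := fun _ h => h.1

lemma B_zero (μ M) : B μ M 0 = 0 := by
  have : BS μ M 0 = ∅ := by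
    ext T
    simp only [BS, Set.mem_ofPred_eq, Set.mem_empty_iff_false, iff_false]
    rintro ⟨⟨_, _, i, j, h, h'⟩, h2⟩
    exact absurd (h2 i j h h') (by omega)
  simp [B, this]

lemma B_top (μ : YoungDiagram) (M : ℤ) (c : ℕ) (h : ∀ i j : ℕ, (i, j) ∈ μ → j < c) :
    B μ M c = G μ M := by
  have : BS μ M c = GS μ M := by
    ext T
    simp only [BS, GS, Set.mem_ofPred_eq, and_iff_left_iff_imp]
    intro _ i j hij _
    exact h i j hij
  simp [B, G, this]

lemma B_succ (μ : YoungDiagram) (M : ℤ) (c : ℕ) : B μ M (c + 1) = B μ M c + A μ M c := by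
  have h1 : BS μ M (c + 1) = BS μ M c ∪ AS μ M c := by
    ext T
    simp only [BS, AS, Set.mem_ofPred_eq, Set.mem_union]
    constructor
    · rintro ⟨h, h2⟩
      by_cases h3 : ∃ i : ℕ, (i, c) ∈ μ ∧ (T i c : ℤ) = M
      · exact Or.inr ⟨h, h3, fun i j a b => Nat.lt_succ_iff.mp (h2 i j a b)⟩
      · refine Or.inl ⟨h, fun i j a b => ?_⟩
        have := h2 i j a b
        have h5 : j ≠ c := by
          rintro rfl
          exact h3 ⟨i, a, b⟩
        omega
    · rintro (⟨h, h2⟩ | ⟨h, _, h2⟩)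
      · exact ⟨h, fun i j a b => (h2 i j a b).trans (Nat.lt_succ_self _)⟩
      · exact ⟨h, fun i j a b => Nat.lt_succ_of_le (h2 i j a b)⟩
  have h2 : Disjoint (BS μ M c) (AS μ M c) := by
    rw [Set.disjoint_left]
    rintro T ⟨_, h⟩ ⟨_, ⟨i, h2, h3⟩, _⟩
    exact absurd (h i c h2 h3) (by omega)
  rw [B, h1, Set.ncard_union_eq h2 ((GS_finite μ M).subset (BS_sub μ M c))
    ((GS_finite μ M).subset (AS_sub μ M c))]
  push_cast
  rfl

lemma A_zero (μ : YoungDiagram) (M : ℤ) (c : ℕ)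
    (h : ∀ i : ℕ, (i, c) ∈ μ → (i + 1, c) ∈ μ ∨ (i, c + 1) ∈ μ) : A μ M c = 0 := by
  have : AS μ M c = ∅ := by
    ext T
    simp only [AS, Set.mem_ofPred_eq, Set.mem_empty_iff_false, iff_false]
    rintro ⟨⟨_, h1, _⟩, ⟨i, h3, h4⟩, h5⟩
    rcases h i h3 with h6 | h6
    · have := T.col_strict (lt_add_one i) h6
      have := h1 _ _ h6
      omega
    · have := T.row_weak (lt_add_one c) h6
      have h7 := h1 _ _ h6
      have := h5 i (c + 1) h6 (by omega)
      omega
  simp [A, this]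

lemma B_const (μ : YoungDiagram) (M : ℤ) (c k : ℕ)
    (h : ∀ j, c ≤ j → j < c + k → ∀ i : ℕ, (i, j) ∈ μ → (i + 1, j) ∈ μ ∨ (i, j + 1) ∈ μ) :
    B μ M (c + k) = B μ M c := by
  induction k with
  | zero => rfl
  | succ k ih =>
    rw [← add_assoc, B_succ, A_zero μ M (c + k) (h (c + k) (by omega) (by omega)),
      ih (fun j h1 h2 => h j h1 (by omega)), add_zero]

/-- restriction -/
def res (μ ν : YoungDiagram) (hs : ∀ i j : ℕ, (i, j) ∈ ν → (i, j) ∈ μ)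
    (T : SemistandardYoungTableau μ) : SemistandardYoungTableau ν where
  entry i j := if (i, j) ∈ ν then T i j else 0
  row_weak' := by
    intro i j1 j2 h1 h2
    rw [if_pos h2, if_pos (ν.up_left_mem le_rfl h1.le h2)]
    exact T.row_weak h1 (hs _ _ h2)
  col_strict' := by
    intro i1 i2 j h1 h2
    rw [if_pos h2, if_pos (ν.up_left_mem h1.le le_rfl h2)]
    exact T.col_strict h1 (hs _ _ h2)
  zeros' := by
    intro i j h
    rw [if_neg h]

lemma res_apply (μ ν hs) (T : SemistandardYoungTableau μ) (i j : ℕ) (h : (i, j) ∈ ν) :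
    res μ ν hs T i j = T i j := by
  change (if (i, j) ∈ ν then T i j else 0) = _
  rw [if_pos h]

/-- extension -/
def extd (μ ν : YoungDiagram) (r c : ℕ)
    (hm : ∀ i j : ℕ, (i, j) ∈ μ ↔ (i, j) ∈ ν ∨ (i = r ∧ j = c))
    (hn : (r, c) ∉ ν) (T : SemistandardYoungTableau ν) (M : ℕ)
    (h1 : ∀ i j : ℕ, (i, j) ∈ ν → T i j ≤ M) (h2 : ∀ i : ℕ, (i, c) ∈ ν → T i c < M) :
    SemistandardYoungTableau μ where
  entry i j := if i = r ∧ j = c then M else T i j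
  row_weak' := by
    intro i j1 j2 hj hmem
    have a1 : (i, j1) ∈ ν := by
      rcases (hm i j1).1 (μ.up_left_mem le_rfl hj.le hmem) with h | ⟨rfl, rfl⟩
      · exact h
      · rcases (hm _ _).1 hmem with h | ⟨_, h⟩
        · exact ν.up_left_mem le_rfl hj.le h
        · omega
    rw [if_neg (by rintro ⟨rfl, rfl⟩; exact hn a1)]
    split_ifs with h3
    · exact h1 _ _ a1
    · exact T.row_weak hj (((hm _ _).1 hmem).resolve_right h3)
  col_strict' := by
    intro i1 i2 j hi hmem
    have a1 : (i1, j) ∈ ν := by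
      rcases (hm i1 j).1 (μ.up_left_mem hi.le le_rfl hmem) with h | ⟨rfl, rfl⟩
      · exact h
      · rcases (hm _ _).1 hmem with h | ⟨h, _⟩
        · exact ν.up_left_mem hi.le le_rfl h
        · omega
    rw [if_neg (by rintro ⟨rfl, rfl⟩; exact hn a1)]
    split_ifs with h3
    · obtain ⟨rfl, rfl⟩ := h3
      exact h2 _ a1
    · exact T.col_strict hi (((hm _ _).1 hmem).resolve_right h3)
  zeros' := by
    intro i j h
    rw [hm] at h
    push Not at h
    rw [if_neg (by rintro ⟨rfl, rfl⟩; exact h.2 rfl rfl)]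
    exact T.zeros h.1

lemma key_bij (μ ν : YoungDiagram) (M : ℤ) (r c : ℕ)
    (hm : ∀ i j : ℕ, (i, j) ∈ μ ↔ (i, j) ∈ ν ∨ (i = r ∧ j = c))
    (hn : (r, c) ∉ ν) (h0 : (0, 0) ∈ ν) :
    Set.BijOn (res μ ν (fun i j h => (hm i j).2 (Or.inl h))) (AS μ M c)
      (BS ν M c ∪ (GS ν (M - 1) \ BS ν (M - 1) c)) := by
  have hs : ∀ i j : ℕ, (i, j) ∈ ν → (i, j) ∈ μ := fun i j h => (hm i j).2 (Or.inl h)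
  have hrc : (r, c) ∈ μ := (hm r c).2 (Or.inr ⟨rfl, rfl⟩)
  have hlt : ∀ i : ℕ, (i, c) ∈ ν → i < r := by
    intro i h
    by_contra h'
    exact hn (ν.up_left_mem (by omega) le_rfl h)
  have hTrc : ∀ T ∈ AS μ M c, (T r c : ℤ) = M := by
    rintro T ⟨⟨_, h1, _⟩, ⟨i, h3, h4⟩, h5⟩
    rcases (hm i c).1 h3 with h | ⟨rfl, _⟩
    · have := T.col_strict (hlt i h) hrc
      have := h1 _ _ hrc
      omega
    · exact h4
  refine ⟨?_, ?_, ?_⟩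
  · intro T hT
    have hT1 := hTrc T hT
    obtain ⟨⟨hq, h1, _⟩, _, h5⟩ := hT
    have hqy : IsQY ν (res μ ν hs T) := by
      rintro v hv ⟨p, q, hpq, hv2⟩
      rw [res_apply _ _ _ _ _ _ hpq] at hv2
      obtain ⟨i, j, i', j', b1, b2, b3, b4, b5⟩ := hq v hv ⟨p, q, hs _ _ hpq, hv2⟩
      have c2 : (i', j') ∈ ν := by
        rcases (hm _ _).1 b2 with h | ⟨rfl, rfl⟩
        · exact h
        · have := h1 _ _ b1
          omega
      rcases (hm _ _).1 b1 with h | ⟨rfl, rfl⟩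
      · exact ⟨i, j, i', j', h, c2, by rwa [res_apply _ _ _ _ _ _ h],
          by rwa [res_apply _ _ _ _ _ _ c2], b5⟩
      · refine ⟨p, q, i', j', hpq, c2, by rwa [res_apply _ _ _ _ _ _ hpq],
          by rwa [res_apply _ _ _ _ _ _ c2], ?_⟩
        have := h5 p q (hs _ _ hpq) (by omega)
        omega
    by_cases hM : ∃ i j : ℕ, (i, j) ∈ ν ∧ (T i j : ℤ) = M
    · left
      refine ⟨⟨hqy, ?_, ?_⟩, ?_⟩
      · intro i j hij
        rw [res_apply _ _ _ _ _ _ hij]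
        exact h1 _ _ (hs _ _ hij)
      · obtain ⟨i, j, hij, h⟩ := hM
        exact ⟨i, j, hij, by rwa [res_apply _ _ _ _ _ _ hij]⟩
      · intro i j hij h
        rw [res_apply _ _ _ _ _ _ hij] at h
        have a1 := h5 i j (hs _ _ hij) h
        have a2 : j ≠ c := by
          rintro rfl
          have := T.col_strict (hlt i hij) hrc
          omega
        omega
    · right
      have hb : ∀ i j : ℕ, (i, j) ∈ ν → (T i j : ℤ) ≤ M - 1 := by
        intro i j hij
        have a1 := h1 _ _ (hs _ _ hij)
        have a2 : (T i j : ℤ) ≠ M := fun h => hM ⟨i, j, hij, h⟩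
        omega
      have hM0 := hb 0 0 h0
      obtain ⟨i, j, i', j', b1, b2, b3, b4, b5⟩ := hq (T r c) (by omega) ⟨r, c, hrc, rfl⟩
      have e1 : i = r ∧ j = c := by
        rcases (hm _ _).1 b1 with h | h
        · have := hb _ _ h
          omega
        · exact h
      obtain ⟨rfl, rfl⟩ := e1
      have c2 : (i', j') ∈ ν := by
        rcases (hm _ _).1 b2 with h | ⟨rfl, rfl⟩
        · exact h
        · omega
      refine ⟨⟨hqy, ?_, i', j', c2, ?_⟩, ?_⟩
      · intro i j hij
        rw [res_apply _ _ _ _ _ _ hij]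
        exact hb _ _ hij
      · rw [res_apply _ _ _ _ _ _ c2]
        omega
      · rintro ⟨_, h⟩
        have := h i' j' c2 (by rw [res_apply _ _ _ _ _ _ c2]; omega)
        omega
  · intro T hT T' hT' h
    apply SemistandardYoungTableau.ext
    intro i j
    by_cases hij : (i, j) ∈ ν
    · rw [← res_apply μ ν hs T i j hij, ← res_apply μ ν hs T' i j hij]
      exact congrArg (fun S : SemistandardYoungTableau ν => S i j) h
    · by_cases h2 : i = r ∧ j = c
      · obtain ⟨rfl, rfl⟩ := h2
        have := hTrc T hT
        have := hTrc T' hT'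
        omega
      · have h3 : (i, j) ∉ μ := by
          rw [hm]
          tauto
        rw [T.zeros h3, T'.zeros h3]
  · intro S hS
    have hM0 : 0 ≤ M := by
      rcases hS with ⟨⟨_, _, i, j, _, h⟩, _⟩ | ⟨⟨_, _, i, j, _, h⟩, _⟩ <;> omega
    obtain ⟨N, rfl⟩ := Int.eq_ofNat_of_zero_le hM0
    have h1 : ∀ i j : ℕ, (i, j) ∈ ν → S i j ≤ N := by
      intro i j hij
      rcases hS with ⟨⟨_, h, _⟩, _⟩ | ⟨⟨_, h, _⟩, _⟩ <;> have := h i j hij <;> omega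
    have h2 : ∀ i : ℕ, (i, c) ∈ ν → S i c < N := by
      intro i hij
      rcases hS with ⟨⟨_, h, _⟩, h'⟩ | ⟨⟨_, h, _⟩, _⟩
      · have a1 := h _ _ hij
        by_contra h3
        have := h' i c hij (by omega)
        omega
      · have := h i c hij
        omega
    let T := extd μ ν r c hm hn S N h1 h2
    have hT1 : T r c = N := by
      change (if r = r ∧ c = c then N else S r c) = N
      simp
    have hT2 : ∀ i j : ℕ, (i, j) ∈ ν → T i j = S i j := by
      intro i j hij
      change (if i = r ∧ j = c then N else S i j) = S i j
      rw [if_neg]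
      rintro ⟨rfl, rfl⟩
      exact hn hij
    have hS1 : IsQY ν S := by
      rcases hS with ⟨⟨h, _⟩, _⟩ | ⟨⟨h, _⟩, _⟩ <;> exact h
    refine ⟨T, ⟨⟨?_, ?_, r, c, hrc, by rw [hT1]⟩, ⟨r, hrc, by rw [hT1]⟩, ?_⟩, ?_⟩
    · have old : ∀ v : ℕ, 0 < v → (∃ i j : ℕ, (i, j) ∈ ν ∧ S i j = v) →
        ∃ i j i' j' : ℕ, (i, j) ∈ μ ∧ (i', j') ∈ μ ∧ T i j = v ∧ T i' j' = v - 1 ∧ j ≤ j' := by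
        intro v hv h
        obtain ⟨i, j, i', j', b1, b2, b3, b4, b5⟩ := hS1 v hv h
        exact ⟨i, j, i', j', hs _ _ b1, hs _ _ b2, by rwa [hT2 _ _ b1], by rwa [hT2 _ _ b2], b5⟩
      rintro v hv ⟨i, j, hij, hv2⟩
      rcases (hm _ _).1 hij with h | ⟨rfl, rfl⟩
      · exact old v hv ⟨i, j, h, by rw [← hT2 _ _ h, hv2]⟩
      · have hvN : v = N := by omega
        subst hvN
        rcases hS with ⟨⟨_, _, p, q, hpq, h'⟩, _⟩ | ⟨h', h''⟩
        · exact old v hv ⟨p, q, hpq, by omega⟩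
        · have : ∃ p q : ℕ, (p, q) ∈ ν ∧ (S p q : ℤ) = v - 1 ∧ j ≤ q := by
            by_contra h3
            push Not at h3
            exact h'' ⟨h', h3⟩
          obtain ⟨p, q, hpq, h3, h4⟩ := this
          exact ⟨i, j, p, q, hij, hs _ _ hpq, hT1, by rw [hT2 _ _ hpq]; omega, h4⟩
    · intro i j hij
      rcases (hm _ _).1 hij with h | ⟨rfl, rfl⟩
      · rw [hT2 _ _ h]
        exact_mod_cast h1 _ _ h
      · rw [hT1]
    · intro i j hij h3
      rcases (hm _ _).1 hij with h | ⟨rfl, rfl⟩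
      · rw [hT2 _ _ h] at h3
        rcases hS with ⟨_, h'⟩ | ⟨⟨_, h', _⟩, _⟩
        · exact (h' _ _ h h3).le
        · have := h' _ _ h
          omega
      · exact le_rfl
    · apply SemistandardYoungTableau.ext
      intro i j
      by_cases hij : (i, j) ∈ ν
      · rw [res_apply _ _ _ _ _ _ hij, hT2 _ _ hij]
      · rw [SemistandardYoungTableau.zeros _ hij, SemistandardYoungTableau.zeros _ hij]

lemma key (μ ν : YoungDiagram) (M : ℤ) (r c : ℕ)
    (hm : ∀ i j : ℕ, (i, j) ∈ μ ↔ (i, j) ∈ ν ∨ (i = r ∧ j = c))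
    (hn : (r, c) ∉ ν) (h0 : (0, 0) ∈ ν) :
    A μ M c = B ν M c + G ν (M - 1) - B ν (M - 1) c := by
  have h := key_bij μ ν M r c hm hn h0
  have h1 : (AS μ M c).ncard = (BS ν M c ∪ (GS ν (M - 1) \ BS ν (M - 1) c)).ncard := by
    rw [← h.image_eq, h.injOn.ncard_image]
  have hd : Disjoint (BS ν M c) (GS ν (M - 1) \ BS ν (M - 1) c) := by
    rw [Set.disjoint_left]
    rintro T ⟨⟨_, _, i, j, hij, h2⟩, _⟩ ⟨⟨_, h3, _⟩, _⟩
    have := h3 i j hij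
    omega
  rw [Set.ncard_union_eq hd ((GS_finite ν M).subset (BS_sub ν M c))
    ((GS_finite ν (M - 1)).subset Set.sdiff_subset)] at h1
  have h2 := Set.ncard_sdiff_add_ncard_of_subset (BS_sub ν (M - 1) c) (GS_finite ν (M - 1))
  rw [A, B, B, G, h1, ← h2]
  push_cast
  ring

lemma G_eq (μ : YoungDiagram) (m : ℕ) (hm : 1 ≤ m) :
    (QYTeq μ m : ℚ) = G μ ((m : ℤ) - 1) := by
  have : {T : SemistandardYoungTableau μ | IsQY μ T ∧ MaxEq μ T m} = GS μ ((m : ℤ) - 1) := by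
    ext T
    simp only [GS, Mx, MaxEq, EntryLE, Set.mem_ofPred_eq]
    refine and_congr_right fun _ => and_congr ?_ ?_
    · refine forall_congr' fun i => forall_congr' fun j => forall_congr' fun _ => ?_
      omega
    · refine exists_congr fun i => exists_congr fun j => and_congr_right fun _ => ?_
      omega
  rw [G, ← this]
  rfl

/-- factorial on integers -/
noncomputable def fa (k : ℤ) : ℚ := (k.toNat.factorial : ℚ)

/-- inverse factorial on integers, zero at negative arguments -/
noncomputable def fi (k : ℤ) : ℚ := if 0 ≤ k then ((k.toNat.factorial : ℚ))⁻¹ else 0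

lemma fa_rec (k : ℤ) (h : 1 ≤ k) : fa k = k * fa (k - 1) := by
  obtain ⟨n, rfl⟩ : ∃ n : ℕ, k = n + 1 := ⟨(k - 1).toNat, by omega⟩
  have h1 : ((n : ℤ) + 1).toNat = n + 1 := by omega
  have h2 : ((n : ℤ) + 1 - 1).toNat = n := by omega
  rw [fa, fa, h1, h2, Nat.factorial_succ]
  push_cast
  ring

lemma fi_rec (k : ℤ) : fi (k - 1) = k * fi k := by
  rcases lt_trichotomy k 0 with h | h | h
  · rw [fi, fi, if_neg (by omega), if_neg (by omega), mul_zero]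
  · subst h
    simp [fi]
  · obtain ⟨n, rfl⟩ : ∃ n : ℕ, k = n + 1 := ⟨(k - 1).toNat, by omega⟩
    have h1 : ((n : ℤ) + 1).toNat = n + 1 := by omega
    have h2 : ((n : ℤ) + 1 - 1).toNat = n := by omega
    rw [fi, fi, if_pos (by omega), if_pos (by omega), h1, h2, Nat.factorial_succ]
    have : (n.factorial : ℚ) ≠ 0 := by positivity
    push_cast
    field_simp

lemma fi_neg (k : ℤ) (h : k < 0) : fi k = 0 := by
  rw [fi, if_neg (by omega)]

lemma fa_mul_fi (k : ℤ) (h : 0 ≤ k) : fa k * fi k = 1 := by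
  rw [fi, if_pos h, fa]
  have : (k.toNat.factorial : ℚ) ≠ 0 := by positivity
  field_simp

lemma choose_eq (n k : ℕ) : (n.choose k : ℚ) = fa n * fi k * fi ((n : ℤ) - k) := by
  by_cases h : k ≤ n
  · obtain ⟨l, rfl⟩ := Nat.exists_eq_add_of_le h
    rw [fi, fi, if_pos (by omega), if_pos (by omega), fa]
    have h1 : (((k + l : ℕ) : ℤ) - k).toNat = l := by omega
    rw [h1, Nat.cast_add_choose]
    simp only [Int.toNat_natCast]
    have : (k.factorial : ℚ) ≠ 0 := by positivity
    have : (l.factorial : ℚ) ≠ 0 := by positivity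
    field_simp
  · rw [Nat.choose_eq_zero_of_lt (by omega), fi_neg ((n : ℤ) - k) (by omega)]
    simp

/-- The count in Frobenius coordinates. -/
noncomputable def P (a b c d M : ℤ) : ℚ :=
  ((a : ℚ) - b) * ((c : ℚ) - d) * (fa (a + c) * fa (b + c) * fa (b + d) * fa (a + d)) *
    (fi a * fi b * fi c * fi d) *
    (fi (M - d) * fi (M - c) * fi (a + c + d + 1 - M) * fi (b + c + d + 1 - M))

lemma P_rec (a b c d M : ℤ) (h1 : 1 ≤ a + c) (h2 : 1 ≤ b + c) (h3 : 1 ≤ b + d) (h4 : 1 ≤ a + d) :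
    P a b c d M = P (a - 1) b c d M + P a b (c - 1) d (M - 1)
      + (P a (b - 1) c d M + P (a - 1) (b - 1) c d (M - 1) - P (a - 1) (b - 1) c d M)
      + (P a b c (d - 1) (M - 1) + P a b (c - 1) (d - 1) (M - 1)
        - P a b (c - 1) (d - 1) (M - 2)) := by
  unfold P
  have e1 : ∀ x y : ℤ, x - 1 + y = x + y - 1 := by intros; ring
  have e2 : ∀ x y : ℤ, x + (y - 1) = x + y - 1 := by intros; ring
  rw [show M - 1 - (d - 1) = M - d by ring, show M - 1 - (c - 1) = M - c by ring,
    show M - 2 - (d - 1) = M - d - 1 by ring, show M - 2 - (c - 1) = M - c - 1 by ring,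
    show M - 1 - d = M - d - 1 by ring, show M - 1 - c = M - c - 1 by ring,
    show a - 1 + c + d + 1 - M = (a + c + d + 1 - M) - 1 by ring,
    show b - 1 + c + d + 1 - M = (b + c + d + 1 - M) - 1 by ring,
    show a + (c - 1) + d + 1 - (M - 1) = a + c + d + 1 - M by ring,
    show b + (c - 1) + d + 1 - (M - 1) = b + c + d + 1 - M by ring,
    show a - 1 + c + d + 1 - (M - 1) = a + c + d + 1 - M by ring,
    show b - 1 + c + d + 1 - (M - 1) = b + c + d + 1 - M by ring,
    show a + c + (d - 1) + 1 - (M - 1) = a + c + d + 1 - M by ring,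
    show b + c + (d - 1) + 1 - (M - 1) = b + c + d + 1 - M by ring,
    show a + (c - 1) + (d - 1) + 1 - (M - 1) = (a + c + d + 1 - M) - 1 by ring,
    show b + (c - 1) + (d - 1) + 1 - (M - 1) = (b + c + d + 1 - M) - 1 by ring,
    show a + (c - 1) + (d - 1) + 1 - (M - 2) = a + c + d + 1 - M by ring,
    show b + (c - 1) + (d - 1) + 1 - (M - 2) = b + c + d + 1 - M by ring]
  simp only [e1, e2]
  rw [fa_rec _ h1, fa_rec _ h2, fa_rec _ h3, fa_rec _ h4]
  simp only [fi_rec]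
  push_cast
  ring

lemma P_diag1 (a c d M : ℤ) : P a a c d M = 0 := by simp [P]
lemma P_diag2 (a b c M : ℤ) : P a b c c M = 0 := by simp [P]

lemma P_b (a c d M : ℤ) : P a (0 - 1) c d M = 0 := by
  rw [P, fi_neg (0 - 1) (by norm_num)]
  simp
lemma P_d (a b c M : ℤ) : P a b c (0 - 1) M = 0 := by
  rw [P, fi_neg (0 - 1) (by norm_num)]
  simp

/-- hook count -/
noncomputable def Hk (a c M : ℤ) : ℚ := if M = c then fa (a + c) * fi a * fi c else 0

lemma P_base (a c M : ℤ) (ha : 1 ≤ a) (hc : 1 ≤ c) :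
    P a 0 c 0 M = P (a - 1) 0 c 0 M + P a 0 (c - 1) 0 (M - 1)
      + (Hk a (c - 1) (M - 1) + Hk a c (M - 1) - Hk a (c - 1) (M - 2)) := by
  unfold P Hk
  have key0 := fa_mul_fi a (by omega)
  have key1 := fa_mul_fi c (by omega)
  have z0 : fa 0 = 1 := by simp [fa]
  have z1 : fi 0 = 1 := by simp [fi]
  have z2 : fi 1 = 1 := by simp [fi]
  have rac := fa_rec (a + c) (by omega)
  have k0 := fa_mul_fi (a - 1) (by omega)
  have k1 := fa_mul_fi (c - 1) (by omega)
  rcases lt_trichotomy M c with h | h | h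
  · rw [fi_neg (M - c) (by omega), fi_neg (M - 1 - (c - 1)) (by omega), if_neg (by omega),
      if_neg (by omega), if_neg (by omega)]
    simp
  · subst h
    rw [if_pos rfl, if_neg (by omega), if_neg (by omega)]
    rw [show M - 1 - (M - 1) = 0 by ring, show M - M = 0 by ring,
      show a + M + 0 + 1 - M = a + 1 by ring, show 0 + M + 0 + 1 - M = 1 by ring,
      show a - 1 + M + 0 + 1 - M = a by ring,
      show a + (M - 1) + 0 + 1 - (M - 1) = a + 1 by ring,
      show 0 + (M - 1) + 0 + 1 - (M - 1) = 1 by ring,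
      show a - 1 + M = a + M - 1 by ring, show a + (M - 1) = a + M - 1 by ring]
    simp only [add_zero, zero_add, sub_zero, z0, z1, z2]
    have f1 := fi_rec (a + 1)
    have f2 := fi_rec M
    rw [show a + 1 - 1 = a by ring] at f1
    rw [rac]
    push_cast at f1 f2 ⊢
    linear_combination
      (a * M * (a + M) * fa (a + M - 1) * fi M * fi (a + 1)) * (fa M * fi M * key0 + key1)
      - ((a - 1) * M * fa (a + M - 1) * fi M * fi a) * (fa M * fi M * k0 + key1)
      - (a * (M - 1) * fa (a + M - 1) * fi (M - 1) * fi (a + 1)) * (fa a * fi a * k1 + key0)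
      - ((a - 1) * M * fa (a + M - 1) * fi M) * f1
      - (a * (M - 1) * fa (a + M - 1) * fi (a + 1)) * f2
      - (fa (a + M - 1)) * (fi a * f2 + M * fi M * f1)
  · by_cases h' : M = c + 1
    · subst h'
      rw [show c + 1 - 1 = c by ring, if_neg (by omega), if_pos rfl, if_pos (by ring)]
      rw [show c + 1 - c = 1 by ring, show c - (c - 1) = 1 by ring,
        show a + c + 0 + 1 - (c + 1) = a by ring, show 0 + c + 0 + 1 - (c + 1) = 0 by ring,
        show a - 1 + c + 0 + 1 - (c + 1) = a - 1 by ring,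
        show a + (c - 1) + 0 + 1 - c = a by ring,
        show 0 + (c - 1) + 0 + 1 - c = 0 by ring,
        show a - 1 + c = a + c - 1 by ring, show a + (c - 1) = a + c - 1 by ring]
      simp only [add_zero, zero_add, sub_zero, z0, z1, z2]
      have f1 := fi_rec (c + 1)
      have f2 := fi_rec a
      have f3 := fi_rec c
      rw [show c + 1 - 1 = c by ring] at f1
      rw [rac]
      push_cast at f1 f2 f3 ⊢
      linear_combination
        (a * c * (a + c) * fa (a + c - 1) * fi (c + 1) * fi a) * (fa c * fi c * key0 + key1)
        - ((a - 1) * c * fa (a + c - 1) * fi (c + 1) * fi (a - 1)) * (fa c * fi c * k0 + key1)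
        - (a * (c - 1) * fa (a + c - 1) * fi c * fi a) * (fa a * fi a * k1 + key0)
        - ((a - 1) * c * fa (a + c - 1) * fi (c + 1)) * f2
        - (a * (c - 1) * fa (a + c - 1) * fi a) * f1
        - (a + c) * fa (a + c - 1) * fi a * f1
        + fa (a + c - 1) * fi a * f3 + fa (a + c - 1) * fi a * c * f1
    · rw [fi_neg (0 + c + 0 + 1 - M) (by omega), fi_neg (0 + (c - 1) + 0 + 1 - (M - 1)) (by omega),
        if_neg (by omega), if_neg (by omega), if_neg (by omega)]
      simp

/-- cell condition -/
def Cell (a x c y i j : ℕ) : Prop :=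
  (i = 0 ∧ j ≤ a) ∨ (j = 0 ∧ i ≤ c) ∨ (i = 1 ∧ 1 ≤ j ∧ j ≤ x ∧ j ≤ a ∧ 1 ≤ c) ∨
    (j = 1 ∧ 1 ≤ i ∧ i ≤ y ∧ i ≤ c ∧ 1 ≤ a)

instance (a x c y i j : ℕ) : Decidable (Cell a x c y i j) := by
  unfold Cell
  infer_instance

def D (a x c y : ℕ) : YoungDiagram where
  cells := (Finset.range (c + 1) ×ˢ Finset.range (a + 1)).filter
    (fun p => Cell a x c y p.1 p.2)
  isLowerSet := by
    rintro ⟨i, j⟩ ⟨i', j'⟩ h h'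
    obtain ⟨h1, h2⟩ := Prod.mk_le_mk.mp h
    rw [Finset.mem_coe, Finset.mem_filter, Finset.mem_product, Finset.mem_range,
      Finset.mem_range] at h' ⊢
    unfold Cell at h' ⊢
    dsimp only at h' ⊢
    omega

lemma mem_D (a x c y i j : ℕ) : (i, j) ∈ D a x c y ↔ Cell a x c y i j := by
  change (i, j) ∈ (Finset.range (c + 1) ×ˢ Finset.range (a + 1)).filter
    (fun p => Cell a x c y p.1 p.2) ↔ _
  rw [Finset.mem_filter, Finset.mem_product, Finset.mem_range, Finset.mem_range]
  unfold Cell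
  dsimp only
  omega

lemma zero_mem (a x c y : ℕ) : (0, 0) ∈ D a x c y :=
  (mem_D a x c y 0 0).2 (Or.inl ⟨rfl, Nat.zero_le a⟩)

lemma corner1 (a x c y : ℕ) (M : ℤ) (h1 : x ≤ a) (h2 : y = 0 ∨ 1 ≤ a) :
    A (D (a + 1) x c y) M (a + 1) = G (D a x c y) M := by
  rw [key (D (a + 1) x c y) (D a x c y) M 0 (a + 1), B_top, B_top]
  · ring
  · intro i j
    simp only [mem_D, Cell]
    omega
  · intro i j
    simp only [mem_D, Cell]
    omega
  · intro i j
    simp only [mem_D, Cell]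
    omega
  · simp only [mem_D, Cell]
    omega
  · exact zero_mem _ _ _ _

lemma corner4 (a x c y : ℕ) (M : ℤ) (h1 : y ≤ c) (h2 : x = 0 ∨ 1 ≤ c) :
    A (D a x (c + 1) y) M 0 = G (D a x c y) (M - 1) := by
  rw [key (D a x (c + 1) y) (D a x c y) M (c + 1) 0, B_zero, B_zero]
  · ring
  · intro i j
    simp only [mem_D, Cell]
    omega
  · simp only [mem_D, Cell]
    omega
  · exact zero_mem _ _ _ _

/-- Peel off the first row corner. -/
lemma G_top (a k x c y : ℕ) (M : ℤ) (h : 1 ≤ x ∨ y = 0) (hx : x ≤ a) :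
    G (D (a + k + 1) x c y) M =
      B (D (a + k + 1) x c y) M (a + 1) + G (D (a + k) x c y) M := by
  rw [← B_top (D (a + k + 1) x c y) M (a + k + 1 + 1), B_succ, corner1 _ _ _ _ _ (by omega) (by omega),
    show a + k + 1 = (a + 1) + k by ring, B_const]
  · intro j h1 h2 i
    simp only [mem_D, Cell]
    omega
  · intro i j
    simp only [mem_D, Cell]
    omega

lemma B_one (μ M) : B μ M 1 = A μ M 0 := by
  rw [show (1 : ℕ) = 0 + 1 by rfl, B_succ, B_zero, zero_add]

lemma corner2 (a b c d : ℕ) (M : ℤ) (hb : b + 1 ≤ a) (hd : d < c) :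
    A (D (a + 1) (b + 2) c (d + 1)) M (b + 2) =
      G (D (a + 1) (b + 1) c (d + 1)) M - G (D a (b + 1) c (d + 1)) M
        + G (D a (b + 1) c (d + 1)) (M - 1) := by
  rw [key (D (a + 1) (b + 2) c (d + 1)) (D (a + 1) (b + 1) c (d + 1)) M 1 (b + 2)]
  · obtain ⟨k, rfl⟩ := Nat.exists_eq_add_of_le hb
    have e1 := G_top (b + 1) k (b + 1) c (d + 1) M (by omega) (by omega)
    have e2 := G_top (b + 1) k (b + 1) c (d + 1) (M - 1) (by omega) (by omega)
    linear_combination e2 - e1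
  · intro i j
    simp only [mem_D, Cell]
    omega
  · simp only [mem_D, Cell]
    omega
  · exact zero_mem _ _ _ _

lemma corner3 (a b c d : ℕ) (M : ℤ) (hb : b < a) (hd : d + 1 ≤ c) :
    A (D a (b + 1) (c + 1) (d + 2)) M 1 =
      G (D a (b + 1) c (d + 1)) (M - 1) + G (D a (b + 1) (c + 1) (d + 1)) (M - 1)
        - G (D a (b + 1) c (d + 1)) (M - 2) := by
  rw [key (D a (b + 1) (c + 1) (d + 2)) (D a (b + 1) (c + 1) (d + 1)) M (d + 2) 1, B_one, B_one,
    corner4 _ _ _ _ _ (by omega) (by omega), corner4 _ _ _ _ _ (by omega) (by omega),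
    show M - 1 - 1 = M - 2 by ring]
  · intro i j
    simp only [mem_D, Cell]
    omega
  · simp only [mem_D, Cell]
    omega
  · exact zero_mem _ _ _ _

lemma corner23 (a c : ℕ) (M : ℤ) :
    A (D (a + 1) 1 (c + 1) 1) M 1 =
      G (D (a + 1) 0 c 0) (M - 1) + G (D (a + 1) 0 (c + 1) 0) (M - 1)
        - G (D (a + 1) 0 c 0) (M - 2) := by
  rw [key (D (a + 1) 1 (c + 1) 1) (D (a + 1) 0 (c + 1) 0) M 1 1, B_one, B_one,
    corner4 _ _ _ _ _ (by omega) (by omega), corner4 _ _ _ _ _ (by omega) (by omega),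
    show M - 1 - 1 = M - 2 by ring]
  · intro i j
    simp only [mem_D, Cell]
    omega
  · simp only [mem_D, Cell]
    omega
  · exact zero_mem _ _ _ _

lemma hook_base (M : ℤ) : G (D 0 0 0 0) M = if M = 0 then 1 else 0 := by
  have h0 : (0, 0) ∈ D 0 0 0 0 := by simp [mem_D, Cell]
  have hc : ∀ i j : ℕ, (i, j) ∈ D 0 0 0 0 → i = 0 ∧ j = 0 := by
    intro i j
    simp only [mem_D, Cell]
    omega
  have hT : ∀ T : SemistandardYoungTableau (D 0 0 0 0), IsQY _ T → T 0 0 = 0 := by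
    intro T hq
    by_contra h
    obtain ⟨i, j, i', j', b1, b2, b3, b4, b5⟩ := hq (T 0 0) (by omega) ⟨0, 0, h0, rfl⟩
    obtain ⟨rfl, rfl⟩ := hc _ _ b2
    omega
  split_ifs with h
  · subst h
    have : GS (D 0 0 0 0) 0 = {SemistandardYoungTableau.highestWeight _} := by
      ext T
      simp only [Set.mem_singleton_iff]
      constructor
      · intro hh
        apply SemistandardYoungTableau.ext
        intro i j
        by_cases hij : (i, j) ∈ D 0 0 0 0
        · obtain ⟨rfl, rfl⟩ := hc _ _ hij
          rw [hT T hh.1]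
          simp
        · rw [T.zeros hij, SemistandardYoungTableau.zeros _ hij]
      · rintro rfl
        refine ⟨?_, ?_, 0, 0, h0, by simp⟩
        · rintro v hv ⟨i, j, hij, h⟩
          obtain ⟨rfl, rfl⟩ := hc _ _ hij
          simp at h
          omega
        · intro i j hij
          obtain ⟨rfl, rfl⟩ := hc _ _ hij
          simp
    simp [G, this]
  · have : GS (D 0 0 0 0) M = ∅ := by
      ext T
      simp only [Set.mem_empty_iff_false, iff_false]
      rintro ⟨hq, _, i, j, hij, h2⟩
      obtain ⟨rfl, rfl⟩ := hc _ _ hij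
      rw [hT T hq] at h2
      exact h (by simpa using h2.symm)
    simp [G, this]

lemma Hk_rec (a c M : ℤ) (h : 1 ≤ a + c) :
    Hk a c M = Hk (a - 1) c M + Hk a (c - 1) (M - 1) := by
  unfold Hk
  by_cases hM : M = c
  · rw [if_pos hM, if_pos hM, if_pos (by omega), fa_rec _ h, fi_rec, fi_rec,
      show a - 1 + c = a + c - 1 by ring, show a + (c - 1) = a + c - 1 by ring]
    push_cast
    ring
  · rw [if_neg hM, if_neg hM, if_neg (by omega)]
    ring

lemma Hk_neg1 (c M : ℤ) : Hk (-1) c M = 0 := by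
  simp [Hk, fi_neg (-1) (by norm_num)]
lemma Hk_neg2 (c M : ℤ) : Hk c (-1) M = 0 := by
  simp [Hk, fi_neg (-1) (by norm_num)]

lemma B_hook0 (a : ℕ) (M : ℤ) (ha : 1 ≤ a) : A (D a 0 0 0) M 0 = 0 := by
  apply A_zero
  intro i
  simp only [mem_D, Cell]
  omega

lemma hook (n : ℕ) : ∀ (a c : ℕ) (_ : a + c = n) (M : ℤ), G (D a 0 c 0) M = Hk a c M := by
  induction n with
  | zero =>
    intro a c h M
    obtain ⟨rfl, rfl⟩ : a = 0 ∧ c = 0 := by omega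
    rw [hook_base]
    simp [Hk, fa, fi]
  | succ n ih =>
    intro a c h M
    rw [Hk_rec _ _ _ (by omega)]
    have e4 : A (D a 0 c 0) M 0 = Hk a ((c : ℤ) - 1) (M - 1) := by
      rcases c with _ | c
      · rw [B_hook0 _ _ (by omega)]
        simp [Hk_neg2]
      · rw [corner4 _ _ _ _ _ (by omega) (by omega), ih a c (by omega)]
        push_cast
        rw [add_sub_cancel_right]
    rcases a with _ | a
    · rw [← e4, ← B_one, B_top]
      · simp [Hk_neg1]
      · intro i j
        simp only [mem_D, Cell]
        omega
    · have := G_top 0 a 0 c 0 M (by omega) (by omega)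
      simp only [zero_add] at this
      rw [this, B_one, e4, ih a c (by omega)]
      push_cast
      rw [add_sub_cancel_right]
      ring

lemma main (n : ℕ) : ∀ (a b c d : ℕ) (_ : a + b + c + d = n) (_ : b < a) (_ : d < c) (M : ℤ),
    G (D a (b + 1) c (d + 1)) M = P a b c d M := by
  induction n using Nat.strong_induction_on with
  | _ n ih =>
  intro a b c d hn hb hd M
  have e1 : G (D a (b + 1) c (d + 1)) M =
      B (D a (b + 1) c (d + 1)) M (b + 2) + P ((a : ℤ) - 1) b c d M := by
    obtain ⟨k, rfl⟩ := Nat.exists_eq_add_of_lt hb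
    rcases k with _ | k
    · have : ((b + 0 + 1 : ℕ) : ℤ) - 1 = b := by push_cast; ring
      rw [this, P_diag1, B_top]
      · ring
      intro i j
      simp only [mem_D, Cell]
      omega
    · have := G_top (b + 1) k (b + 1) c (d + 1) M (by omega) (by omega)
      rw [show b + (k + 1) + 1 = b + 1 + k + 1 by ring, this,
        ih _ (by omega) (b + 1 + k) b c d rfl (by omega) (by omega)]
      push_cast
      rw [add_sub_cancel_right]
  have e4 : B (D a (b + 1) c (d + 1)) M 1 = P a b ((c : ℤ) - 1) d (M - 1) := by
    rw [B_one]
    by_cases hcd : c = d + 1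
    · have : (c : ℤ) - 1 = d := by omega
      rw [this, P_diag2, A_zero]
      intro i
      simp only [mem_D, Cell, true_and]
      omega
    · obtain ⟨c, rfl⟩ : ∃ c', c = c' + 1 := ⟨c - 1, by omega⟩
      rw [corner4 _ _ _ _ _ (by omega) (by omega), ih _ (by omega) a b c d rfl hb (by omega)]
      push_cast
      rw [add_sub_cancel_right]
  have e3 : 1 ≤ d → A (D a (b + 1) c (d + 1)) M 1 =
      P a b c ((d : ℤ) - 1) (M - 1) + P a b ((c : ℤ) - 1) ((d : ℤ) - 1) (M - 1)
        - P a b ((c : ℤ) - 1) ((d : ℤ) - 1) (M - 2) := by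
    intro hd1
    obtain ⟨d, rfl⟩ : ∃ d', d = d' + 1 := ⟨d - 1, by omega⟩
    obtain ⟨c, rfl⟩ : ∃ c', c = c' + 1 := ⟨c - 1, by omega⟩
    rw [corner3 _ _ _ _ _ (by omega) (by omega),
      ih _ (by omega) a b c d rfl (by omega) (by omega),
      ih _ (by omega) a b c d rfl (by omega) (by omega),
      ih _ (by omega) a b (c + 1) d rfl (by omega) (by omega)]
    push_cast
    rw [add_sub_cancel_right, add_sub_cancel_right]
    ring
  have e2 : 1 ≤ b → A (D a (b + 1) c (d + 1)) M (b + 1) =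
      P a ((b : ℤ) - 1) c d M + P ((a : ℤ) - 1) ((b : ℤ) - 1) c d (M - 1)
        - P ((a : ℤ) - 1) ((b : ℤ) - 1) c d M := by
    intro hb1
    obtain ⟨b, rfl⟩ : ∃ b', b = b' + 1 := ⟨b - 1, by omega⟩
    obtain ⟨a, rfl⟩ : ∃ a', a = a' + 1 := ⟨a - 1, by omega⟩
    rw [corner2 _ _ _ _ _ (by omega) (by omega),
      ih _ (by omega) a b c d rfl (by omega) (by omega),
      ih _ (by omega) a b c d rfl (by omega) (by omega),
      ih _ (by omega) (a + 1) b c d rfl (by omega) (by omega)]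
    push_cast
    rw [add_sub_cancel_right, add_sub_cancel_right]
    ring
  rw [e1, B_succ]
  by_cases hb0 : b = 0
  · subst hb0
    simp only [zero_add] at *
    rw [e4]
    by_cases hd0 : d = 0
    · subst hd0
      simp only [zero_add] at *
      obtain ⟨a, rfl⟩ : ∃ a', a = a' + 1 := ⟨a - 1, by omega⟩
      obtain ⟨c, rfl⟩ : ∃ c', c = c' + 1 := ⟨c - 1, by omega⟩
      have := P_base ((a + 1 : ℕ) : ℤ) ((c + 1 : ℕ) : ℤ) M (by omega) (by omega)
      rw [corner23, hook _ _ _ rfl, hook _ _ _ rfl, hook _ _ _ rfl]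
      simp only [Nat.cast_zero]
      rw [this, show ((c + 1 : ℕ) : ℤ) - 1 = c by push_cast; ring]
      ring
    · rw [e3 (by omega), P_rec a _ c d M (by omega) (by omega) (by omega) (by omega)]
      simp only [Nat.cast_zero]
      rw [P_b, P_b, P_b]
      ring
  · rw [e2 (by omega)]
    have hB : B (D a (b + 1) c (d + 1)) M (b + 1) = B (D a (b + 1) c (d + 1)) M 2 := by
      obtain ⟨k, rfl⟩ : ∃ k, b = k + 1 := ⟨b - 1, by omega⟩
      rw [show k + 1 + 1 = 2 + k by ring]
      apply B_const
      intro j h1 h2 i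
      simp only [mem_D, Cell]
      omega
    rw [hB, B_succ, e4, P_rec a b c d M (by omega) (by omega) (by omega) (by omega)]
    by_cases hd0 : d = 0
    · subst hd0
      have : A (D a (b + 1) c (0 + 1)) M 1 = 0 := by
        apply A_zero
        intro i
        simp only [mem_D, Cell]
        omega
      rw [this]
      simp only [Nat.cast_zero]
      rw [P_d, P_d, P_d]
      ring
    · rw [e3 (by omega)]
      ring

set_option maxHeartbeats 1000000 in
lemma formula_eq (a b c d m : ℕ) (hb : b < a) (hd : d < c) (hm : c + 1 ≤ m) :
    qytFormula (a + 1) (b + 2) (c + 1) (d + 2) m = P a b c d ((m : ℤ) - 1) := by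
  obtain ⟨k, rfl⟩ := Nat.exists_eq_add_of_le hm
  obtain ⟨e, rfl⟩ := Nat.exists_eq_add_of_lt hb
  obtain ⟨s, rfl⟩ := Nat.exists_eq_add_of_lt hd
  unfold qytFormula P
  rw [show b + e + 1 + 1 - (b + 2) + 1 = e + 1 by omega,
    show d + s + 1 + 1 + k - (d + 2) = s + k by omega,
    show b + e + 1 + 1 + (d + s + 1 + 1) - 2 = b + e + 1 + (d + s + 1) by omega,
    show b + 2 + (d + s + 1 + 1) - 3 = b + (d + s + 1) by omega,
    show d + s + 1 + 1 + k - (d + s + 1 + 1) = k by omega,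
    show b + 2 + (d + 2) - 4 = b + d by omega,
    show d + 2 - 2 = d by omega,
    show b + e + 1 + 1 + (d + 2) - 3 = b + e + 1 + d by omega,
    show d + s + 1 + 1 - 1 = d + s + 1 by omega]
  simp only [choose_eq]
  push_cast
  rw [show (b : ℤ) + d - d = b by ring, show (b : ℤ) + e + 1 + d - d = b + e + 1 by ring,
    show (d : ℤ) + s + 1 - d = s + 1 by ring, show (s : ℤ) + k - k = s by ring,
    show (d : ℤ) + s + 1 + 1 + k - 1 - d = s + k + 1 by ring,
    show (d : ℤ) + s + 1 + 1 + k - 1 - (d + s + 1) = k by ring,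
    show (b : ℤ) + e + 1 + (d + s + 1) + d + 1 - (d + s + 1 + 1 + k - 1)
      = b + e + 1 + (d + s + 1) - (s + k) by ring,
    show (b : ℤ) + (d + s + 1) + d + 1 - (d + s + 1 + 1 + k - 1)
      = b + (d + s + 1) - (s + k) by ring]
  have f1 := fi_rec ((s : ℤ) + k + 1)
  have f2 := fi_rec ((s : ℤ) + 1)
  rw [add_sub_cancel_right] at f1 f2
  have g1 := fa_mul_fi ((s : ℤ) + k) (by omega)
  have g2 := fa_mul_fi ((d : ℤ) + s + 1) (by omega)
  have n1 : fa ((d : ℤ) + s + 1) ≠ 0 := left_ne_zero_of_mul_eq_one g2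
  have n2 : fi (d : ℤ) ≠ 0 := right_ne_zero_of_mul_eq_one (fa_mul_fi (d : ℤ) (by omega))
  have n3 : fi ((s : ℤ) + 1) ≠ 0 := right_ne_zero_of_mul_eq_one (fa_mul_fi ((s : ℤ) + 1) (by omega))
  have n4 : (s : ℚ) + k + 1 ≠ 0 := by positivity
  have g2' : fi ((d : ℤ) + s + 1) = (fa ((d : ℤ) + s + 1))⁻¹ := eq_inv_of_mul_eq_one_right g2
  have g1' : fa ((s : ℤ) + k) = (((s : ℚ) + k + 1) * fi ((s : ℤ) + k + 1))⁻¹ := by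
    rw [f1] at g1
    push_cast at g1
    exact eq_inv_of_mul_eq_one_left g1
  have n5 : fi ((s : ℤ) + k + 1) ≠ 0 :=
    right_ne_zero_of_mul_eq_one (fa_mul_fi ((s : ℤ) + k + 1) (by omega))
  rw [g2', g1', f1, f2]
  push_cast
  clear g1 g2 f1 f2 g1' g2'
  generalize fi ((s : ℤ) + k + 1) = x1 at *
  generalize fi ((s : ℤ) + 1) = x2 at *
  generalize fi (d : ℤ) = x3 at *
  generalize fa ((d : ℤ) + s + 1) = x4 at *
  generalize fi ((b : ℤ) + e + 1 + (d + s + 1) - (s + k)) = x5 at *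
  generalize fi ((b : ℤ) + (d + s + 1) - (s + k)) = x6 at *
  generalize fa ((b : ℤ) + e + 1 + (d + s + 1)) = x7 at *
  generalize fa ((b : ℤ) + (d + s + 1)) = x8 at *
  generalize fa ((b : ℤ) + d) = x9 at *
  generalize fa ((b : ℤ) + e + 1 + d) = x10 at *
  field_simp
  ring

end QYaux

/-- Main theorem: for a partition `λ = (λ₁, λ₂, 2^{h₂-2}, 1^{h₁-h₂})`
of size `n` with `λ₁, λ₂, h₁, h₂ ≥ 2` and `h₁ ≤ m ≤ n - (λ₁ - 1)`, the number of
quasi-Yamanouchi tableaux of shape `λ` with maximum entry exactly `m` is given by the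
product formula. -/
theorem qyt_durfee_two_product_formula (l1 l2 h1 h2 m : ℕ)
    (hl2 : 2 ≤ l2) (hl : l2 ≤ l1) (hh2 : 2 ≤ h2) (hh : h2 ≤ h1)
    (μ : YoungDiagram) (hμ : HasRows2 μ l1 l2 h1 h2)
    (hm1 : h1 ≤ m) (hm2 : m ≤ μ.card - (l1 - 1)) :
    (QYTeq μ m : ℚ) = qytFormula l1 l2 h1 h2 m := by
  obtain ⟨b, rfl⟩ : ∃ b, l2 = b + 2 := ⟨l2 - 2, by omega⟩
  obtain ⟨a, rfl⟩ : ∃ a, l1 = a + 1 := ⟨l1 - 1, by omega⟩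
  obtain ⟨d, rfl⟩ : ∃ d, h2 = d + 2 := ⟨h2 - 2, by omega⟩
  obtain ⟨c, rfl⟩ : ∃ c, h1 = c + 1 := ⟨h1 - 1, by omega⟩
  have hD : μ = QYaux.D a (b + 1) c (d + 1) := by
    obtain ⟨r0, r1, r2, r3, r4⟩ := hμ
    have hmem : ∀ i j : ℕ, (i, j) ∈ μ ↔ (i, j) ∈ QYaux.D a (b + 1) c (d + 1) := by
      intro i j
      rw [YoungDiagram.mem_iff_lt_rowLen, QYaux.mem_D]
      unfold QYaux.Cell
      rcases Nat.lt_or_ge i 2 with h | h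
      · have h' : i = 0 ∨ i = 1 := by omega
        rcases h' with rfl | rfl
        · rw [r0]
          omega
        · rw [r1]
          omega
      · rcases Nat.lt_or_ge i (d + 2) with h' | h'
        · rw [r2 i h h']
          omega
        · rcases Nat.lt_or_ge i (c + 1) with h'' | h''
          · rw [r3 i h' h'']
            omega
          · rw [r4 i h'']
            omega
    ext ⟨i, j⟩
    exact hmem i j
  rw [QYaux.G_eq μ m (by omega), hD, QYaux.main _ a b c d rfl (by omega) (by omega)]
  exact (QYaux.formula_eq a b c d m (by omega) (by omega) (by omega)).symm
end

section
/- Let λ = (λ₁, λ₂, 2^{h₂−2}, 1^{h₁−h₂}) with λ₁ ≥ λ₂ ≥ 2, h₁ ≥ h₂ ≥ 2, and |λ| = n. When m = h₁ (the minimum possible maximum entry), the number of quasi-Yamanouchi tableaux of shape λ with maximum entry exactly m equals the number of semistandard Young tableaux of shape λ with entries at most h₁, given by the hook-content formula ∏_{u∈λ} (h₁ + c(u))/h(u). -/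
open YoungDiagram

def IsS (n : ℕ) (a : Fin n → ℕ) (T : Fin n → ℕ → ℕ) : Prop :=
  (∀ i j1 j2, j1 < j2 → j2 < a i → T i j1 ≤ T i j2) ∧
  (∀ i1 i2 j, i1 < i2 → j < a i2 → T i1 j < T i2 j) ∧
  (∀ i j, a i ≤ j → T i j = 0) ∧
  (∀ i j, j < a i → T i j < n ∧ (i : ℕ) ≤ T i j)

open Classical in
noncomputable def extS (n : ℕ) (a : Fin (n+1) → ℕ) (b : Fin n → ℕ) (T : Fin n → ℕ → ℕ) :
    Fin (n+1) → ℕ → ℕ := fun i j =>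
  if h : ∃ h : i.val < n, j < b ⟨i, h⟩ then T ⟨i, h.1⟩ j else if j < a i then n else 0

abbrev boxS (n : ℕ) (a : Fin (n+1) → ℕ) : Finset (Fin n → ℕ) :=
  Fintype.piFinset (fun i : Fin n => Finset.Icc (a i.succ) (a i.castSucc))

lemma mem_boxS {n : ℕ} {a : Fin (n+1) → ℕ} {b : Fin n → ℕ} (hb : b ∈ boxS n a) (i : ℕ) (h : i < n) :
    a ⟨i+1, by omega⟩ ≤ b ⟨i, h⟩ ∧ b ⟨i, h⟩ ≤ a ⟨i, by omega⟩ := by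
  have := Fintype.mem_piFinset.1 hb ⟨i, h⟩
  simpa using this

lemma extS_isS {n : ℕ} {a : Fin (n+1) → ℕ} (ha : Antitone a) {b : Fin n → ℕ} (hb : b ∈ boxS n a)
    {T : Fin n → ℕ → ℕ} (hT : IsS n b T) : IsS (n+1) a (extS n a b T) := by
  obtain ⟨h1, h2, h3, h4⟩ := hT
  have hbb := mem_boxS hb
  have hba : ∀ i1 i2 : ℕ, ∀ h1 : i1 < n, ∀ h2 : i2 < n + 1, i1 < i2 → a ⟨i2, h2⟩ ≤ b ⟨i1, h1⟩ := by
    intro i1 i2 h1 h2 h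
    exact le_trans (ha (by simp [Fin.le_def]; omega)) (hbb i1 h1).1
  refine ⟨?_, ?_, ?_, ?_⟩
  · rintro ⟨i, hi⟩ j1 j2 hj hja
    unfold extS
    by_cases g2 : ∃ h : i < n, j2 < b ⟨i, h⟩
    · have g1 : ∃ h : i < n, j1 < b ⟨i, h⟩ := ⟨g2.1, lt_trans hj g2.2⟩
      rw [dif_pos g1, dif_pos g2]
      exact h1 _ _ _ hj g2.2
    · rw [dif_neg g2, if_pos hja, if_pos (hj.trans hja)]
      split_ifs with g1
      · exact (h4 _ _ g1.2).1.le
      · exact le_rfl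
  · rintro ⟨i1, hi1⟩ ⟨i2, hi2⟩ j hi hja
    have hi' : i1 < i2 := hi
    have g : ∃ h : i1 < n, j < b ⟨i1, h⟩ := ⟨by omega, lt_of_lt_of_le hja (hba _ _ _ _ hi')⟩
    unfold extS
    rw [dif_pos g]
    split_ifs with g1
    · exact h2 _ _ _ (by simpa using hi') g1.2
    · exact (h4 _ _ g.2).1
  · rintro ⟨i, hi⟩ j hj
    unfold extS
    rw [dif_neg, if_neg]
    · omega
    · rintro ⟨h, h'⟩
      have := (hbb i h).2
      simp only at *
      omega
  · rintro ⟨i, hi⟩ j hj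
    unfold extS
    split_ifs with g1
    · have := h4 _ _ g1.2
      simp only at *
      omega
    · simp only at *
      omega

lemma extS_lt {n : ℕ} {a : Fin (n+1) → ℕ} {b : Fin n → ℕ} (hb : b ∈ boxS n a)
    {T : Fin n → ℕ → ℕ} (hT : IsS n b T) (i : Fin n) (j : ℕ) :
    (j < a i.castSucc ∧ extS n a b T i.castSucc j < n) ↔ j < b i := by
  have h0 := (mem_boxS hb i i.2).2
  constructor
  · rintro ⟨h1, h2⟩
    by_contra h
    unfold extS at h2
    rw [dif_neg, if_pos h1] at h2
    · omega
    · rintro ⟨_, h'⟩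
      exact h h'
  · intro h
    refine ⟨lt_of_lt_of_le h h0, ?_⟩
    unfold extS
    rw [dif_pos ⟨i.2, h⟩]
    exact (hT.2.2.2 _ _ h).1

lemma extS_eq {n : ℕ} {a : Fin (n+1) → ℕ} {b : Fin n → ℕ} 
    {T : Fin n → ℕ → ℕ} (i : Fin n) (j : ℕ) (h : j < b i) :
    extS n a b T i.castSucc j = T i j := by
  unfold extS
  rw [dif_pos ⟨i.2, h⟩]
  rfl

lemma exists_cut (A : ℕ) (p : ℕ → Prop) (hp : ∀ j1 j2, j1 < j2 → j2 < A → p j2 → p j1) :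
    ∃ k, k ≤ A ∧ ∀ j, j < A → (p j ↔ j < k) := by
  induction A with
  | zero => exact ⟨0, le_rfl, by intro j hj; omega⟩
  | succ A ih =>
    obtain ⟨k, hk, hk2⟩ := ih (fun j1 j2 h h' => hp j1 j2 h (by omega))
    by_cases hA : p A
    · refine ⟨A+1, le_rfl, fun j hj => ⟨fun _ => hj, fun _ => ?_⟩⟩
      rcases Nat.lt_or_ge j A with h | h
      · exact hp _ _ h (by omega) hA
      · have : j = A := by omega
        exact this ▸ hA
    · refine ⟨k, by omega, fun j hj => ?_⟩
      rcases Nat.lt_or_ge j A with h | h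
      · exact hk2 j h
      · have : j = A := by omega
        subst this
        exact ⟨fun h => absurd h hA, fun h => by omega⟩

noncomputable def mapS (n : ℕ) (a : Fin (n+1) → ℕ) (ha : Antitone a) :
    (Σ b : boxS n a, {T // IsS n b.1 T}) → {T // IsS (n+1) a T} :=
  fun x => ⟨extS n a x.1.1 x.2.1, extS_isS ha x.1.2 x.2.2⟩

lemma mapS_bij (n : ℕ) (a : Fin (n+1) → ℕ) (ha : Antitone a) : Function.Bijective (mapS n a ha) := by
  constructor
  · rintro ⟨⟨b, hb⟩, ⟨T, hT⟩⟩ ⟨⟨b', hb'⟩, ⟨T', hT'⟩⟩ h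
    have h : extS n a b T = extS n a b' T' := congrArg Subtype.val h
    have e : b = b' := by
      funext i
      have : ∀ j, j < b i ↔ j < b' i := fun j => by
        rw [← extS_lt hb hT, ← extS_lt hb' hT', h]
      have h1 := this (b i)
      have h2 := this (b' i)
      omega
    subst e
    have e : T = T' := by
      funext i j
      rcases Nat.lt_or_ge j (b i) with hj | hj
      · rw [← extS_eq (a := a) (T := T) i j hj, h, extS_eq i j hj]
      · rw [hT.2.2.1 _ _ hj, hT'.2.2.1 _ _ hj]
    subst e
    rfl
  · rintro ⟨T, h1, h2, h3, h4⟩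
    have hc : ∀ i : Fin n, ∃ k, k ≤ a i.castSucc ∧ ∀ j, j < a i.castSucc → (T i.castSucc j < n ↔ j < k) :=
      fun i => exists_cut _ _ (fun j1 j2 h h' h'' => lt_of_le_of_lt (h1 _ _ _ h h') h'')
    choose b hb1 hb2 using hc
    have hb : b ∈ boxS n a := by
      refine Fintype.mem_piFinset.2 fun i => Finset.mem_Icc.2 ⟨?_, hb1 i⟩
      by_contra hlt
      push Not at hlt
      have hle : a i.succ ≤ a i.castSucc := ha (Fin.castSucc_lt_succ).le
      have h5 := h2 i.castSucc i.succ (b i) (Fin.castSucc_lt_succ) hlt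
      have h6 := (h4 i.succ (b i) hlt).1
      have := (hb2 i (b i) (by omega)).1 (by omega)
      omega
    have hab : ∀ i j, j < b i → j < a i.castSucc := fun i j h => lt_of_lt_of_le h (hb1 i)
    let T' : Fin n → ℕ → ℕ := fun i j => if j < b i then T i.castSucc j else 0
    have hbanti : ∀ i1 i2 : Fin n, i1 < i2 → b i2 ≤ b i1 := by
      intro i1 i2 h
      have h1 := (mem_boxS hb i1 i1.2).1
      have h2 := hb1 i2
      have h3 : a i2.castSucc ≤ a ⟨i1+1, by omega⟩ := ha (by simpa [Fin.le_def] using h)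
      exact h2.trans (h3.trans h1)
    have hT' : IsS n b T' := by
      refine ⟨?_, ?_, ?_, ?_⟩
      · intro i j1 j2 hj hjb
        simp only [T', if_pos hjb, if_pos (hj.trans hjb)]
        exact h1 _ _ _ hj (hab _ _ hjb)
      · intro i1 i2 j hi hj
        simp only [T', if_pos hj, if_pos (lt_of_lt_of_le hj (hbanti _ _ hi))]
        exact h2 _ _ _ (by simpa using hi) (hab _ _ hj)
      · intro i j hj
        simp only [T']
        rw [if_neg (by omega)]
      · intro i j hj
        simp only [T', if_pos hj]
        exact ⟨(hb2 i j (hab _ _ hj)).2 hj, by simpa using (h4 _ _ (hab _ _ hj)).2⟩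
    refine ⟨⟨⟨b, hb⟩, ⟨T', hT'⟩⟩, Subtype.ext ?_⟩
    funext i j
    change extS n a b T' i j = T i j
    refine Fin.lastCases ?_ (fun i => ?_) i
    · unfold extS
      rw [dif_neg (by rintro ⟨h, _⟩; simp at h)]
      split_ifs with h
      · have := h4 _ _ h
        simp at this
        omega
      · exact (h3 _ _ (by omega)).symm
    · rcases Nat.lt_or_ge j (b i) with hj | hj
      · rw [extS_eq _ _ hj]
        simp only [T', if_pos hj]
      · unfold extS
        rw [dif_neg (by rintro ⟨h, h'⟩; exact absurd h' (by simpa using hj))]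
        split_ifs with h
        · have := (h4 _ _ h).1
          have h7 := mt (hb2 i j h).1 (by omega)
          omega
        · exact (h3 _ _ (by omega)).symm

lemma finiteS (n : ℕ) : ∀ a : Fin n → ℕ, Antitone a → Finite {T // IsS n a T} := by
  induction n with
  | zero => intro a _; infer_instance
  | succ n ih =>
    intro a ha
    have : ∀ b : boxS n a, Finite {T // IsS n b.1 T} := fun b => ih _ (by
      intro i1 i2 h
      rcases h.eq_or_lt with h | h
      · rw [h]
      · have h1 := (mem_boxS b.2 i1 i1.2).1
        have h2 := (mem_boxS b.2 i2 i2.2).2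
        have h3 : a ⟨i2, by omega⟩ ≤ a ⟨i1+1, by omega⟩ := ha (by simpa [Fin.le_def] using h)
        exact h2.trans (h3.trans h1))
    exact Finite.of_surjective _ (mapS_bij n a ha).2

lemma box_anti {n : ℕ} {a : Fin (n+1) → ℕ} (ha : Antitone a) {b : Fin n → ℕ} (hb : b ∈ boxS n a) :
    Antitone b := by
  intro i1 i2 h
  rcases h.eq_or_lt with h | h
  · rw [h]
  · have h1 := (mem_boxS hb i1 i1.2).1
    have h2 := (mem_boxS hb i2 i2.2).2
    have h3 : a ⟨i2, by omega⟩ ≤ a ⟨i1+1, by omega⟩ := ha (by simpa [Fin.le_def] using h)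
    exact h2.trans (h3.trans h1)

lemma cardS_succ (n : ℕ) (a : Fin (n+1) → ℕ) (ha : Antitone a) :
    Nat.card {T // IsS (n+1) a T} = ∑ b ∈ boxS n a, Nat.card {T // IsS n b T} := by
  have : ∀ b : boxS n a, Finite {T // IsS n b.1 T} := fun b => finiteS n _ (box_anti ha b.2)
  rw [← Nat.card_eq_of_bijective _ (mapS_bij n a ha), Nat.card_sigma]
  exact Finset.sum_coe_sort (boxS n a) (fun b => Nat.card {T // IsS n b T})

noncomputable def matS (n : ℕ) (a : Fin n → ℕ) : Matrix (Fin n) (Fin n) ℚ :=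
  Matrix.of fun i j => (descPochhammer ℚ (j : ℕ)).eval (((i : ℕ) : ℚ) - (a i : ℚ))

lemma dp_diff (j : ℕ) (x : ℚ) : (descPochhammer ℚ (j+1)).eval (x+1) - (descPochhammer ℚ (j+1)).eval x
    = (j+1) * (descPochhammer ℚ j).eval x := by
  have h1 : (descPochhammer ℚ (j+1)).eval (x+1) = (x+1) * (descPochhammer ℚ j).eval x := by
    rw [descPochhammer_succ_left]; simp
  rw [h1, descPochhammer_succ_right]
  simp
  ring

lemma dp_sum (j i a' a : ℕ) (h : a' ≤ a) :
    (descPochhammer ℚ (j+1)).eval ((i:ℚ)+1-a') - (descPochhammer ℚ (j+1)).eval ((i:ℚ)-a)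
     = (j+1) * ∑ b ∈ Finset.Icc a' a, (descPochhammer ℚ j).eval ((i:ℚ)-b) := by
  induction a, h using Nat.le_induction with
  | base =>
    simp only [Finset.Icc_self, Finset.sum_singleton]
    rw [← dp_diff]; ring_nf
  | succ a h ih =>
    rw [Finset.sum_Icc_succ_top (by omega), mul_add, ← ih, ← dp_diff]
    push_cast
    ring_nf

lemma det_matS_succ (n : ℕ) (a : Fin (n+1) → ℕ) (ha : Antitone a) :
    (matS (n+1) a).det = n.factorial * ∑ b ∈ boxS n a, (matS n b).det := by
  let B : Matrix (Fin (n+1)) (Fin (n+1)) ℚ := Matrix.of fun i j =>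
    Fin.cases (matS (n+1) a 0 j) (fun i => matS (n+1) a i.succ j - matS (n+1) a i.castSucc j) i
  have h1 : (matS (n+1) a).det = B.det := by
    apply Matrix.det_eq_of_forall_row_eq_smul_add_pred (fun _ => 1)
    · intro j; simp [B]
    · intro i j; simp [B]
  have h2 : B.det = (Matrix.of fun i j : Fin n => ((j:ℕ)+1 : ℚ) * 
      ∑ b ∈ Finset.Icc (a i.succ) (a i.castSucc), (descPochhammer ℚ j).eval ((i:ℕ)-(b:ℚ))).det := by
    rw [Matrix.det_succ_column_zero, Fin.sum_univ_succ, Finset.sum_eq_zero]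
    · have : B 0 0 = 1 := by simp [B, matS]
      rw [this]
      simp only [Fin.val_zero, pow_zero, one_mul, add_zero]
      congr 1
      ext i j
      rw [Matrix.of_apply, ← dp_sum _ _ _ _ (ha Fin.castSucc_lt_succ.le)]
      simp [B, matS]
    · intro i _
      have : B i.succ 0 = 0 := by simp [B, matS]
      rw [this]; simp
  have h3 := Matrix.det_mul_row (fun j : Fin n => ((j:ℕ)+1 : ℚ)) (Matrix.of fun i j : Fin n =>  
      ∑ b ∈ Finset.Icc (a i.succ) (a i.castSucc), (descPochhammer ℚ j).eval ((i:ℕ)-(b:ℚ)))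
  rw [h1, h2]
  simp only [Matrix.of_apply] at h3
  rw [h3]
  congr 1
  · rw [Fin.prod_univ_eq_prod_range (fun j => (j+1 : ℚ)) n, ← Finset.prod_range_add_one_eq_factorial]
    push_cast; rfl
  · have := (Matrix.detRowAlternating (n := Fin n) (R := ℚ)).toMultilinearMap.map_sum_finset
      (fun (i : Fin n) (b : ℕ) => fun j : Fin n => (descPochhammer ℚ j).eval ((i:ℕ)-(b:ℚ)))
      (fun i => Finset.Icc (a i.succ) (a i.castSucc))
    refine Eq.trans ?_ this
    change Matrix.det _ = Matrix.det _
    congr 1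
    ext i j
    simp

lemma cardS_det (n : ℕ) : ∀ a : Fin n → ℕ, Antitone a →
    (Nat.card {T // IsS n a T} : ℚ) * ∏ k ∈ Finset.range n, (k.factorial : ℚ) = (matS n a).det := by
  induction n with
  | zero =>
    intro a _
    have : Nat.card {T // IsS 0 a T} = 1 := by
      rw [Nat.card_eq_one_iff_unique]
      exact ⟨inferInstance, ⟨fun i => i.elim0, by simp [IsS]⟩⟩
    simp [this]
  | succ n ih =>
    intro a ha
    rw [det_matS_succ n a ha, cardS_succ n a ha, Finset.prod_range_succ]
    push_cast
    rw [Finset.sum_mul, Finset.mul_sum]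
    refine Finset.sum_congr rfl fun b hb => ?_
    rw [← ih b (box_anti ha hb)]
    ring

lemma det_matS (n : ℕ) (a : Fin n → ℕ) : (matS n a).det =
    ∏ i : Fin n, ∏ k ∈ Finset.Ioi i, ((((k:ℕ):ℚ) - a k) - (((i:ℕ):ℚ) - a i)) := by
  rw [← Matrix.det_vandermonde (fun i : Fin n => ((i:ℕ):ℚ) - a i)]
  exact (Matrix.det_eval_matrixOfPolynomials_eq_det_vandermonde _ (fun j : Fin n => descPochhammer ℚ j)
    (fun i => descPochhammer_natDegree ..) (fun i => monic_descPochhammer ..)).symm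

lemma ssyt_ge {μ : YoungDiagram} (T : SemistandardYoungTableau μ) (i j : ℕ) (h : (i, j) ∈ μ) :
    i ≤ T i j := by
  induction i with
  | zero => omega
  | succ i ih =>
    have h1 := ih (μ.up_left_mem (Nat.le_succ i) le_rfl h)
    have h2 : T i j < T (i+1) j := T.col_strict (Nat.lt_succ_self i) h
    omega

lemma ssyt_card (μ : YoungDiagram) (n : ℕ) (hn : ∀ i, n ≤ i → μ.rowLen i = 0) :
    SSYTle μ n = Nat.card {T // IsS n (fun i : Fin n => μ.rowLen i) T} := by
  have hlt : ∀ i j, (i, j) ∈ μ → i < n := by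
    intro i j h
    by_contra h'
    have := YoungDiagram.mem_iff_lt_rowLen.1 h
    rw [hn i (by omega)] at this
    omega
  have hm : ∀ i j, (i, j) ∈ μ ↔ j < μ.rowLen i := fun i j => YoungDiagram.mem_iff_lt_rowLen
  refine Nat.card_congr ⟨fun T => ⟨fun i j => T.1 i j, ?_, ?_, ?_, ?_⟩,
    fun T => ⟨⟨fun i j => if h : i < n then T.1 ⟨i, h⟩ j else 0, ?_, ?_, ?_⟩, ?_⟩, ?_, ?_⟩
  · intro i j1 j2 h h'
    exact T.1.row_weak h ((hm _ _).2 h')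
  · intro i1 i2 j h h'
    exact T.1.col_strict h ((hm _ _).2 h')
  · intro i j h
    exact T.1.zeros (fun h' => absurd ((hm _ _).1 h') (not_lt.2 h))
  · intro i j h
    exact ⟨T.2 _ _ ((hm _ _).2 h), ssyt_ge T.1 _ _ ((hm _ _).2 h)⟩
  · intro i j1 j2 h h'
    have hi := hlt _ _ h'
    simp only [dif_pos hi]
    exact T.2.1 ⟨i, hi⟩ _ _ h ((hm _ _).1 h')
  · intro i1 i2 j h h'
    have hi := hlt _ _ h'
    simp only [dif_pos hi, dif_pos (h.trans hi)]
    exact T.2.2.1 _ _ _ h ((hm _ _).1 h')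
  · intro i j h
    split_ifs with hi
    · exact T.2.2.2.1 _ _ (by rw [hm] at h; simp only; omega)
    · rfl
  · intro i j h
    have hi := hlt _ _ h
    change (if h : i < n then T.1 ⟨i, h⟩ j else 0) < n
    rw [dif_pos hi]
    exact (T.2.2.2.2 _ _ ((hm _ _).1 h)).1
  · intro T
    apply Subtype.ext
    apply SemistandardYoungTableau.ext
    intro i j
    change (if h : i < n then T.1 i j else 0) = T.1 i j
    split_ifs with h
    · rfl
    · exact (T.1.zeros (fun h' => h (hlt _ _ h'))).symm
  · intro T
    apply Subtype.ext
    funext i j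
    change (if h : i.1 < n then T.1 ⟨i.1, h⟩ j else 0) = T.1 i j
    rw [dif_pos i.2]

lemma prod_Icc_fact (n : ℕ) : ∏ x ∈ Finset.Icc 1 n, x = n.factorial := by
  induction n with
  | zero => simp
  | succ n ih => rw [Finset.prod_Icc_succ_top (by omega), ih, Nat.factorial_succ, mul_comm]

lemma hook_row (μ : YoungDiagram) (n : ℕ) (hn : ∀ i, n ≤ i → μ.rowLen i = 0) (i : ℕ) (hi : i < n) :
    (∏ j ∈ Finset.range (μ.rowLen i), hookLength μ i j) *
      ∏ k ∈ Finset.Ioo i n, (μ.rowLen i + k - (μ.rowLen k + i)) =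
    (μ.rowLen i + (n - 1 - i)).factorial := by
  have hm : ∀ i j, j < μ.rowLen i ↔ i < μ.colLen j := fun i j => by
    rw [← YoungDiagram.mem_iff_lt_rowLen, YoungDiagram.mem_iff_lt_colLen]
  have hc : ∀ j1 j2, j1 ≤ j2 → μ.colLen j2 ≤ μ.colLen j1 := fun j1 j2 h => μ.colLen_anti _ _ h
  have hr : ∀ j1 j2, j1 ≤ j2 → μ.rowLen j2 ≤ μ.rowLen j1 := fun j1 j2 h => μ.rowLen_anti _ _ h
  have hcn : ∀ j, μ.colLen j ≤ n := by
    intro j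
    by_contra h
    have := (hm n j).2 (by omega)
    rw [hn n le_rfl] at this
    omega
  have inj1 : Set.InjOn (fun j => hookLength μ i j) (Finset.range (μ.rowLen i) : Set ℕ) := by
    intro j1 h1 j2 h2 h
    simp only [Finset.coe_range, Set.mem_Iio] at h1 h2
    have g1 := (hm _ _).1 h1
    have g2 := (hm _ _).1 h2
    simp only [hookLength] at h
    rcases le_total j1 j2 with h' | h'
    · have := hc _ _ h'
      omega
    · have := hc _ _ h'
      omega
  have inj2 : Set.InjOn (fun k => μ.rowLen i + k - (μ.rowLen k + i)) (Finset.Ioo i n : Set ℕ) := by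
    intro j1 h1 j2 h2 h
    simp only [Finset.coe_Ioo, Set.mem_Ioo] at h1 h2
    have g1 := hr _ _ h1.1.le
    have g2 := hr _ _ h2.1.le
    simp only at h
    rcases le_total j1 j2 with h' | h'
    · have := hr _ _ h'
      omega
    · have := hr _ _ h'
      omega
  have disj : Disjoint ((Finset.range (μ.rowLen i)).image (fun j => hookLength μ i j))
      ((Finset.Ioo i n).image (fun k => μ.rowLen i + k - (μ.rowLen k + i))) := by
    rw [Finset.disjoint_left]
    intro x hx hy
    simp only [Finset.mem_image, Finset.mem_range, Finset.mem_Ioo, hookLength] at hx hy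
    obtain ⟨j, hj, rfl⟩ := hx
    obtain ⟨k, hk, h⟩ := hy
    have g1 := (hm _ _).1 hj
    have g2 := hr _ _ hk.1.le
    have g3 := hm k j
    omega
  have hun : (Finset.range (μ.rowLen i)).image (fun j => hookLength μ i j) ∪
      (Finset.Ioo i n).image (fun k => μ.rowLen i + k - (μ.rowLen k + i)) =
      Finset.Icc 1 (μ.rowLen i + (n - 1 - i)) := by
    apply Finset.eq_of_subset_of_card_le
    · intro x hx
      simp only [Finset.mem_union, Finset.mem_image, Finset.mem_range, Finset.mem_Ioo, hookLength] at hx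
      rw [Finset.mem_Icc]
      rcases hx with ⟨j, hj, rfl⟩ | ⟨k, hk, rfl⟩
      · have g1 := (hm _ _).1 hj
        have := hcn j
        omega
      · have g2 := hr _ _ hk.1.le
        omega
    · rw [Finset.card_union_of_disjoint disj, Finset.card_image_of_injOn inj1,
        Finset.card_image_of_injOn inj2]
      simp
      omega
  rw [← prod_Icc_fact, ← hun, Finset.prod_union disj, Finset.prod_image inj1,
    Finset.prod_image inj2]

lemma content_row (n i L : ℕ) (hi : i < n) :
    (∏ j ∈ Finset.range L, ((n : ℚ) + (j : ℚ) - (i : ℚ))) * ((n - 1 - i).factorial : ℚ) =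
      ((L + (n - 1 - i)).factorial : ℚ) := by
  induction L with
  | zero => simp
  | succ L ih =>
    rw [Finset.prod_range_succ, mul_right_comm, ih,
      show L + 1 + (n - 1 - i) = (L + (n - 1 - i)) + 1 by omega, Nat.factorial_succ]
    have : ((L + (n - 1 - i) + 1 : ℕ) : ℚ) = (n : ℚ) + L - i := by
      rw [show L + (n - 1 - i) + 1 = n + L - i by omega, Nat.cast_sub (by omega)]
      push_cast; ring
    rw [Nat.cast_mul, this]
    ring

lemma cells_prod (μ : YoungDiagram) (n : ℕ) (hn : ∀ i, n ≤ i → μ.rowLen i = 0) (f : ℕ → ℕ → ℚ) :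
    ∏ c ∈ μ.cells, f c.1 c.2 = ∏ i ∈ Finset.range n, ∏ j ∈ Finset.range (μ.rowLen i), f i j := by
  rw [Finset.prod_sigma']
  refine Finset.prod_bij' (fun c _ => ⟨c.1, c.2⟩) (fun c _ => (c.1, c.2)) ?_ ?_ ?_ ?_ ?_
  · rintro ⟨i, j⟩ h
    have h' := YoungDiagram.mem_iff_lt_rowLen.1 ((YoungDiagram.mem_cells _).1 h)
    simp only [Finset.mem_sigma, Finset.mem_range]
    refine ⟨?_, h'⟩
    by_contra h2
    rw [hn i (by omega)] at h'
    omega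
  · rintro ⟨i, j⟩ h
    simp only [Finset.mem_sigma, Finset.mem_range] at h
    exact (YoungDiagram.mem_cells _).2 (YoungDiagram.mem_iff_lt_rowLen.2 h.2)
  · intros; rfl
  · intros; rfl
  · intros; rfl

lemma hook_content_general (μ : YoungDiagram) (n : ℕ) (hn : ∀ i, n ≤ i → μ.rowLen i = 0) :
    (SSYTle μ n : ℚ) = hookContent μ n := by
  have hanti : Antitone (fun i : Fin n => μ.rowLen i) := fun i j h => μ.rowLen_anti _ _ h
  have h1 := cardS_det n (fun i : Fin n => μ.rowLen i) hanti
  rw [← ssyt_card μ n hn, det_matS] at h1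
  have h0 : ∏ k ∈ Finset.range n, (k.factorial : ℚ) ≠ 0 :=
    Finset.prod_ne_zero_iff.2 fun k _ => by exact_mod_cast k.factorial_ne_zero
  apply mul_right_cancel₀ h0
  rw [h1]
  have hrow : ∀ i : Fin n, ∏ k ∈ Finset.Ioi i,
      ((((k:ℕ):ℚ) - μ.rowLen k) - (((i:ℕ):ℚ) - μ.rowLen i)) =
      ∏ k ∈ Finset.Ioo (i:ℕ) n, ((μ.rowLen i + k - (μ.rowLen k + i) : ℕ) : ℚ) := by
    intro i
    have : Finset.Ioo (i:ℕ) n = (Finset.Ioi i).map Fin.valEmbedding := by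
      ext x
      simp only [Finset.mem_Ioo, Finset.mem_map, Finset.mem_Ioi, Fin.valEmbedding_apply]
      constructor
      · intro h; exact ⟨⟨x, h.2⟩, h.1, rfl⟩
      · rintro ⟨y, h, rfl⟩; exact ⟨h, y.2⟩
    rw [this, Finset.prod_map]
    refine Finset.prod_congr rfl fun k hk => ?_
    have hik : i < k := by simpa using hk
    have := μ.rowLen_anti i k (le_of_lt hik)
    have h2 : (i:ℕ) < k := hik
    rw [Fin.valEmbedding_apply, Nat.cast_sub (by omega)]
    push_cast; ring
  rw [Finset.prod_congr rfl (fun i _ => hrow i), Fin.prod_univ_eq_prod_range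
    (fun i => ∏ k ∈ Finset.Ioo i n, ((μ.rowLen i + k - (μ.rowLen k + i) : ℕ) : ℚ)) n]
  rw [hookContent, cells_prod μ n hn (fun i j => ((n : ℚ) + (j : ℚ) - (i : ℚ)) / (hookLength μ i j : ℚ)),
    ← Finset.prod_range_reflect (fun k => (k.factorial : ℚ)) n, ← Finset.prod_mul_distrib]
  refine Finset.prod_congr rfl fun i hi => ?_
  have hi := Finset.mem_range.1 hi
  have e1 := content_row n i (μ.rowLen i) hi
  have e2 : (∏ j ∈ Finset.range (μ.rowLen i), (hookLength μ i j : ℚ)) *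
      ∏ k ∈ Finset.Ioo i n, ((μ.rowLen i + k - (μ.rowLen k + i) : ℕ) : ℚ) =
      ((μ.rowLen i + (n - 1 - i)).factorial : ℚ) := by
    exact_mod_cast hook_row μ n hn i hi
  have hne : (∏ j ∈ Finset.range (μ.rowLen i), (hookLength μ i j : ℚ)) ≠ 0 := by
    intro h
    rw [h, zero_mul] at e2
    exact absurd e2.symm (by exact_mod_cast Nat.factorial_ne_zero _)
  rw [Finset.prod_div_distrib, div_mul_eq_mul_div, e1, ← e2, mul_div_cancel_left₀ _ hne]

lemma col_zero {μ : YoungDiagram} (T : SemistandardYoungTableau μ) (n : ℕ) (hT : EntryLE μ T n)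
    (hc : ∀ i, i < n → (i, 0) ∈ μ) (d : ℕ) : ∀ i, i + d + 1 = n → T i 0 = i := by
  suffices h : ∀ i, i + d + 1 = n → T i 0 ≤ i from
    fun i hi => le_antisymm (h i hi) (ssyt_ge T i 0 (hc i (by omega)))
  induction d with
  | zero =>
    intro i hi
    have := hT i 0 (hc i (by omega))
    omega
  | succ d ih =>
    intro i hi
    have h1 := ih (i+1) (by omega)
    have h2 := T.col_strict (Nat.lt_succ_self i) (hc (i+1) (by omega))
    have h3 : T i 0 < T (i+1) 0 := h2
    omega

lemma qyt_eq (μ : YoungDiagram) (n : ℕ) (hn : 0 < n) (hc : ∀ i, i < n → (i, 0) ∈ μ) :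
    QYTeq μ n = SSYTle μ n := by
  refine Nat.card_congr (Equiv.subtypeEquivRight fun T => ⟨fun h => h.2.1, fun h => ?_⟩)
  have hz : ∀ i, i < n → T i 0 = i := fun i hi => col_zero T n h hc (n - 1 - i) i (by omega)
  refine ⟨?_, h, n - 1, 0, hc _ (by omega), hz _ (by omega)⟩
  rintro v hv ⟨i, j, hij, rfl⟩
  have hlt := h i j hij
  exact ⟨T i j, 0, T i j - 1, 0, hc _ hlt, hc _ (by omega), hz _ hlt, hz _ (by omega), le_rfl⟩

/-- for `λ = (λ₁, λ₂, 2^{h₂-2}, 1^{h₁-h₂})` and `m = h₁` (the minimum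
possible maximum entry), `QYT_{=h₁}(λ)` equals the number of semistandard Young
tableaux of shape `λ` with entries at most `h₁`, given by the hook-content formula. -/
theorem qyt_min_m_hook_content (l1 l2 h1 h2 : ℕ)
    (hl2 : 2 ≤ l2) (hl : l2 ≤ l1) (hh2 : 2 ≤ h2) (hh : h2 ≤ h1)
    (μ : YoungDiagram) (hμ : HasRows2 μ l1 l2 h1 h2) :
    QYTeq μ h1 = SSYTle μ h1 ∧ (SSYTle μ h1 : ℚ) = hookContent μ h1 := by
  obtain ⟨r0, r1, r2, r3, r4⟩ := hμ
  refine ⟨qyt_eq μ h1 (by omega) ?_, hook_content_general μ h1 r4⟩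
  intro i hi
  rw [YoungDiagram.mem_iff_lt_rowLen]
  rcases Nat.lt_or_ge i h2 with h | h
  · rcases Nat.lt_or_ge i 2 with h' | h'
    · interval_cases i <;> omega
    · rw [r2 i h' h]; omega
  · rw [r3 i h hi]; omega
end

section
/- For λ₁ ≥ λ₂ ≥ 2, h₁ ≥ h₂ ≥ 2 and h₁ ≤ m ≤ h₁+h₂+λ₂−3, the identity C(m−h₂+1, h₁−h₂+1)·QYT_{=m}(λ) = C(λ₁+h₂−2, m−h₁)·C(λ₂+h₂−3, m−h₁)·SSYT_{h₁}(λ) holds, where λ = (λ₁, λ₂, 2^{h₂−2}, 1^{h₁−h₂}). -/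
open YoungDiagram

/-- number of weak column descents before position i -/
def Dn (c : ℕ → ℕ) (i : ℕ) : ℕ := ((Finset.range i).filter (fun j => c (j + 1) ≤ c j)).card

theorem Dn_zero (c : ℕ → ℕ) : Dn c 0 = 0 := by simp [Dn]

theorem Dn_succ (c : ℕ → ℕ) (i : ℕ) : Dn c (i + 1) = Dn c i + if c (i + 1) ≤ c i then 1 else 0 := by
  unfold Dn
  rw [Finset.range_add_one, Finset.filter_insert]
  split_ifs
  · rw [Finset.card_insert_of_notMem]; simp
  · rfl

theorem Dn_le (c : ℕ → ℕ) (i : ℕ) : Dn c i ≤ i := by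
  unfold Dn
  exact (Finset.card_filter_le _ _).trans (by simp)

theorem Dn_mono (c : ℕ → ℕ) : Monotone (Dn c) := by
  apply monotone_nat_of_le_succ
  intro i; rw [Dn_succ]; omega

theorem card_strict (n M : ℕ) :
    Nat.card {b : Fin n → ℕ // StrictMono b ∧ ∀ i, b i < M} = M.choose n := by
  have e : {b : Fin n → ℕ // StrictMono b ∧ ∀ i, b i < M} ≃
      {s : Finset ℕ // s ∈ Finset.powersetCard n (Finset.range M)} := by
    refine Equiv.ofBijective (fun b => ⟨Finset.univ.image b.1, ?_⟩) ⟨?_, ?_⟩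
    · rw [Finset.mem_powersetCard]
      refine ⟨?_, ?_⟩
      · intro x hx
        simp only [Finset.mem_image, Finset.mem_univ, true_and] at hx
        obtain ⟨i, rfl⟩ := hx
        simpa using b.2.2 i
      · rw [Finset.card_image_of_injective _ b.2.1.injective]; simp
    · rintro ⟨b, hb, _⟩ ⟨b', hb', _⟩ h
      have h : Finset.univ.image b = Finset.univ.image b' := congrArg Subtype.val h
      have h' := congrArg (fun s : Finset ℕ => (s : Set ℕ)) h
      simp only [Finset.coe_image, Finset.coe_univ, Set.image_univ] at h'
      exact Subtype.ext ((StrictMono.range_inj hb hb').1 h')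
    · rintro ⟨s, hs⟩
      have hs' := Finset.mem_powersetCard.1 hs
      refine ⟨⟨s.orderEmbOfFin hs'.2, (s.orderEmbOfFin hs'.2).strictMono, fun i => ?_⟩, ?_⟩
      · exact Finset.mem_range.1 (hs'.1 (s.orderEmbOfFin_mem hs'.2 i))
      · apply Subtype.ext
        simp
  rw [Nat.card_congr e, Nat.card_eq_fintype_card, Fintype.card_coe]
  simp

theorem lexStep (a c a' c' : ℕ) : toLex (a, c) < toLex (a', c') ↔ a + (if c' ≤ c then 1 else 0) ≤ a' := by
  rw [Prod.Lex.toLex_lt_toLex]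
  simp only []
  split_ifs <;> omega

theorem sm_ge {N : ℕ} (b : Fin (N + 1) → ℕ) (hb : StrictMono b) (i : Fin (N + 1)) : (i : ℕ) ≤ b i := by
  induction i using Fin.induction with
  | zero => simp
  | succ i ih =>
    have := hb (Fin.castSucc_lt_succ (i := i))
    simp at *; omega

theorem sm_gap {N : ℕ} (b : Fin (N + 1) → ℕ) (hb : StrictMono b) (i : Fin (N + 1)) :
    b i + (N - i) ≤ b (Fin.last N) := by
  induction i using Fin.reverseInduction with
  | last => simp
  | cast i ih =>
    have := hb (Fin.castSucc_lt_succ (i := i))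
    simp at *; omega

theorem Dn_gap (c : ℕ → ℕ) (i j : ℕ) (h : i ≤ j) : Dn c j ≤ Dn c i + (j - i) := by
  induction j, h using Nat.le_induction with
  | base => simp
  | succ j h ih => rw [Dn_succ]; split_ifs <;> omega

theorem card_seq (N k : ℕ) (c : ℕ → ℕ) :
    Nat.card {a : Fin (N + 1) → ℕ // StrictMono (fun i => toLex (a i, c i)) ∧ ∀ i, a i < k} =
      (N + k - Dn c N).choose (N + 1) := by
  rw [← card_strict]
  have hD := Dn_le c
  have iff1 : ∀ a : Fin (N + 1) → ℕ, StrictMono (fun i => toLex (a i, c i)) ↔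
      StrictMono (fun i => a i + (i - Dn c i)) := by
    intro a
    rw [Fin.strictMono_iff_lt_succ, Fin.strictMono_iff_lt_succ]
    refine forall_congr' fun i => ?_
    rw [lexStep]
    simp only [Fin.val_castSucc, Fin.val_succ, Dn_succ]
    have := hD i
    split_ifs <;> omega
  refine Nat.card_congr
    { toFun := fun a => ⟨fun i => a.1 i + (i - Dn c i), (iff1 a.1).1 a.2.1, fun i => ?_⟩
      invFun := fun b => ⟨fun i => b.1 i - (i - Dn c i), ?_, ?_⟩
      left_inv := ?_
      right_inv := ?_ }
  · have h1 := ((iff1 a.1).1 a.2.1).monotone (Fin.le_last i)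
    have h2 := a.2.2 (Fin.last N)
    have := hD N
    simp only [Fin.val_last] at h1
    beta_reduce
    omega
  · rw [iff1]
    have : (fun i : Fin (N + 1) => b.1 i - (i - Dn c i) + (i - Dn c i)) = b.1 := by
      funext i
      have := sm_ge b.1 b.2.1 i
      omega
    rw [this]; exact b.2.1
  · intro i
    have h1 := (b.2.1.monotone (Fin.le_last i))
    have h2 := b.2.2 (Fin.last N)
    have h3 := sm_gap b.1 b.2.1 i
    have h5 := Dn_mono c (show (i : ℕ) ≤ N by omega)
    have h6 := hD i
    have h7 := sm_ge b.1 b.2.1 i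
    beta_reduce
    omega
  · intro a
    apply Subtype.ext; funext i; simp
  · intro b
    apply Subtype.ext; funext i
    have := sm_ge b.1 b.2.1 i
    simp only []
    omega

/-- The lexicographic key sequence of a tableau along a listing of cells. -/
def keyOf (μ : YoungDiagram) (T : SemistandardYoungTableau μ) (p : ℕ × ℕ) : ℕ ×ₗ ℕ :=
  toLex (T p.1 p.2, p.2)

def ExtL (μ : YoungDiagram) {n : ℕ} (e : Fin n ≃ μ.cells) : Prop :=
  ∀ i j, (e i).1.1 ≤ (e j).1.1 → (e i).1.2 ≤ (e j).1.2 → i ≤ j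

def GoodL (μ : YoungDiagram) {n : ℕ} (T : SemistandardYoungTableau μ) (e : Fin n ≃ μ.cells) : Prop :=
  StrictMono (fun i => keyOf μ T (e i).1)

theorem GoodL.ext {μ : YoungDiagram} {n : ℕ} {T : SemistandardYoungTableau μ} {e : Fin n ≃ μ.cells}
    (h : GoodL μ T e) : ExtL μ e := by
  intro i j h1 h2
  apply h.le_iff_le.1
  have hj : ((e j).1.1, (e j).1.2) ∈ μ := (e j).2
  have : T (e i).1.1 (e i).1.2 ≤ T (e j).1.1 (e j).1.2 :=
    (T.row_weak_of_le h2 (μ.up_left_mem h1 le_rfl hj)).trans (T.col_weak h1 hj)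
  simp only [keyOf]
  rw [Prod.Lex.toLex_le_toLex]
  simp only []
  omega

theorem key_inj (μ : YoungDiagram) (T : SemistandardYoungTableau μ) :
    Function.Injective (fun p : μ.cells => keyOf μ T p.1) := by
  rintro ⟨⟨i, j⟩, h⟩ ⟨⟨i', j'⟩, h'⟩ heq
  simp only [keyOf, toLex_inj, Prod.mk.injEq] at heq
  obtain ⟨h1, rfl⟩ := heq
  rcases lt_trichotomy i i' with hlt | rfl | hlt
  · have := T.col_strict hlt (by simpa using h'); omega
  · rfl
  · have := T.col_strict hlt (by simpa using h); omega

theorem good_exists {μ : YoungDiagram} {n : ℕ} (hn : μ.cells.card = n) (T : SemistandardYoungTableau μ) :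
    ∃ e : Fin n ≃ μ.cells, GoodL μ T e := by
  let S : Finset (ℕ ×ₗ ℕ) := Finset.univ.image (fun p : μ.cells => keyOf μ T p.1)
  have hS : S.card = n := by
    rw [Finset.card_image_of_injective _ (key_inj μ T)]; simpa using hn
  have hbij : Function.Bijective (fun p : μ.cells => (⟨keyOf μ T p.1, by simp [S]⟩ : S)) := by
    constructor
    · intro p q h
      exact key_inj μ T (congrArg Subtype.val h)
    · rintro ⟨x, hx⟩
      obtain ⟨p, -, hp⟩ := Finset.mem_image.1 hx
      exact ⟨p, Subtype.ext hp⟩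
  let f := Equiv.ofBijective _ hbij
  have hf : ∀ p, (f p).1 = keyOf μ T p.1 := fun p => rfl
  refine ⟨(S.orderIsoOfFin hS).toEquiv.trans f.symm, ?_⟩
  intro i j hij
  simp only [Equiv.trans_apply]
  rw [← hf, ← hf]
  simpa using hij

theorem good_unique {μ : YoungDiagram} {n : ℕ} {T : SemistandardYoungTableau μ}
    {e e' : Fin n ≃ μ.cells} (h : GoodL μ T e) (h' : GoodL μ T e') : e = e' := by
  have : (fun i => keyOf μ T (e i).1) = (fun i => keyOf μ T (e' i).1) := by
    apply (StrictMono.range_inj h h').1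
    have hr : ∀ e : Fin n ≃ μ.cells, Set.range (fun i => keyOf μ T (e i).1) =
      Set.range (fun p : μ.cells => keyOf μ T p.1) := fun e => e.surjective.range_comp (fun p : μ.cells => keyOf μ T p.1)
    rw [hr, hr]
  ext1 i
  exact key_inj μ T (congrFun this i)

theorem finite_le (μ : YoungDiagram) (k : ℕ) : Finite {T : SemistandardYoungTableau μ // EntryLE μ T k} := by
  apply Finite.of_injective (β := μ.cells → Fin k)
    (fun T p => ⟨T.1 p.1.1 p.1.2, T.2 _ _ (by simpa using p.2)⟩)
  intro T T' h
  apply Subtype.ext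
  ext i j
  by_cases hij : (i, j) ∈ μ
  · have := congrFun h ⟨(i, j), by simpa using hij⟩
    simpa using this
  · rw [T.1.zeros hij, T'.1.zeros hij]

open Classical in
theorem card_fiber {μ : YoungDiagram} {n : ℕ} (hn : μ.cells.card = n)
    (P : SemistandardYoungTableau μ → Prop) (hP : Finite {T // P T}) :
    Nat.card {T // P T} = ∑ e : {e : Fin n ≃ μ.cells // ExtL μ e}, Nat.card {T // P T ∧ GoodL μ T e.1} := by
  have : ∀ e : {e : Fin n ≃ μ.cells // ExtL μ e}, Finite {T // P T ∧ GoodL μ T e.1} := fun e =>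
    Finite.of_injective (fun T => (⟨T.1, T.2.1⟩ : {T // P T})) (by
      intro a b h; have h' := congrArg Subtype.val h; exact Subtype.ext h')
  rw [← Nat.card_sigma]
  choose E hE using good_exists (n := n) hn
  refine Nat.card_congr
    { toFun := fun T => ⟨⟨E T.1, (hE T.1).ext⟩, ⟨T.1, T.2, hE T.1⟩⟩
      invFun := fun x => ⟨x.2.1, x.2.2.1⟩
      left_inv := fun T => rfl
      right_inv := ?_ }
  rintro ⟨⟨e, he⟩, ⟨T, hT, hg⟩⟩
  have := good_unique hg (hE T)
  subst this
  rfl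

/-- column word -/
def colw {μ : YoungDiagram} {n : ℕ} (e : Fin n ≃ μ.cells) (i : ℕ) : ℕ :=
  if h : i < n then (e ⟨i, h⟩).1.2 else 0

theorem colw_fin {μ : YoungDiagram} {n : ℕ} (e : Fin n ≃ μ.cells) (i : Fin n) : colw e i = (e i).1.2 := by
  simp [colw]

/-- tableau from a sequence -/
def tabOf {μ : YoungDiagram} {n : ℕ} (e : Fin n ≃ μ.cells) (he : ExtL μ e) (a : Fin n → ℕ)
    (ha : StrictMono (fun i : Fin n => toLex (a i, colw e i))) : SemistandardYoungTableau μ where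
  entry i j := if h : (i, j) ∈ μ.cells then a (e.symm ⟨(i, j), h⟩) else 0
  row_weak' := by
    intro i j1 j2 hj h
    have h1 : (i, j1) ∈ μ := μ.up_left_mem le_rfl hj.le h
    rw [dif_pos ((μ.mem_cells _).2 h), dif_pos ((μ.mem_cells _).2 h1)]
    have := ha.monotone (he (e.symm ⟨(i, j1), by simpa using h1⟩) (e.symm ⟨(i, j2), by simpa using h⟩) (by simp) (by simpa using hj.le))
    simp only [Prod.Lex.toLex_le_toLex] at this
    omega
  col_strict' := by
    intro i1 i2 j hi h
    have h1 : (i1, j) ∈ μ := μ.up_left_mem hi.le le_rfl h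
    rw [dif_pos ((μ.mem_cells _).2 h), dif_pos ((μ.mem_cells _).2 h1)]
    have h2 := (he (e.symm ⟨(i1, j), by simpa using h1⟩) (e.symm ⟨(i2, j), by simpa using h⟩) (by simpa using hi.le) (by simp))
    have h3 := ha (lt_of_le_of_ne h2 (by intro hh; simp at hh; omega))
    simp only [Prod.Lex.toLex_lt_toLex, colw_fin, Equiv.apply_symm_apply] at h3
    omega
  zeros' := by
    intro i j h
    rw [dif_neg (by simpa using h)]

theorem tabOf_apply {μ : YoungDiagram} {n : ℕ} (e : Fin n ≃ μ.cells) (he : ExtL μ e) (a : Fin n → ℕ)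
    (ha : StrictMono (fun i : Fin n => toLex (a i, colw e i))) (i : Fin n) :
    tabOf e he a ha (e i).1.1 (e i).1.2 = a i := by
  change (if h : _ then _ else _) = _
  rw [dif_pos (by simp)]
  simp

theorem good_iff {μ : YoungDiagram} {n : ℕ} (e : Fin n ≃ μ.cells) (T : SemistandardYoungTableau μ) :
    GoodL μ T e ↔ StrictMono (fun i : Fin n => toLex (T (e i).1.1 (e i).1.2, colw e i)) := by
  simp only [GoodL, keyOf, colw_fin]

/-- tableaux with listing e as sequences -/
def tabEquiv {μ : YoungDiagram} {n : ℕ} (e : Fin n ≃ μ.cells) (he : ExtL μ e) :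
    {T // GoodL μ T e} ≃ {a : Fin n → ℕ // StrictMono (fun i : Fin n => toLex (a i, colw e i))} where
  toFun T := ⟨fun i => T.1 (e i).1.1 (e i).1.2, (good_iff e T.1).1 T.2⟩
  invFun a := ⟨tabOf e he a.1 a.2, (good_iff e _).2 (by simpa only [tabOf_apply] using a.2)⟩
  left_inv := by
    intro T
    apply Subtype.ext
    ext i j
    by_cases h : (i, j) ∈ μ.cells
    · change (if h : _ then _ else _) = _
      rw [dif_pos h]; simp
    · change (if h : _ then _ else _) = _
      rw [dif_neg h, T.1.zeros (by simpa using h)]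
  right_inv := by
    intro a
    apply Subtype.ext
    funext i
    exact tabOf_apply e he a.1 a.2 i

theorem forall_cells {μ : YoungDiagram} {n : ℕ} (e : Fin n ≃ μ.cells) (P : ℕ → ℕ → Prop) :
    (∀ i j, (i, j) ∈ μ → P i j) ↔ ∀ i, P (e i).1.1 (e i).1.2 := by
  constructor
  · intro h i; exact h _ _ (by have := (e i).2; simpa using this)
  · intro h i j hij
    have := h (e.symm ⟨(i, j), by simpa using hij⟩)
    simpa using this

theorem exists_cells {μ : YoungDiagram} {n : ℕ} (e : Fin n ≃ μ.cells) (P : ℕ → ℕ → Prop) :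
    (∃ i j, (i, j) ∈ μ ∧ P i j) ↔ ∃ i, P (e i).1.1 (e i).1.2 := by
  have := forall_cells e (fun i j => ¬ P i j)
  have := not_congr this
  push Not at this
  exact this

theorem fiber_le {μ : YoungDiagram} {N : ℕ} (e : Fin (N + 1) ≃ μ.cells) (he : ExtL μ e) (k : ℕ) :
    Nat.card {T // EntryLE μ T k ∧ GoodL μ T e} = (N + k - Dn (colw e) N).choose (N + 1) := by
  rw [← card_seq]
  refine Nat.card_congr
    { toFun := fun T => ⟨(tabEquiv e he ⟨T.1, T.2.2⟩).1, (tabEquiv e he ⟨T.1, T.2.2⟩).2,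
        (forall_cells e (fun i j => T.1 i j < k)).1 T.2.1⟩
      invFun := fun a => ⟨((tabEquiv e he).symm ⟨a.1, a.2.1⟩).1, ?_, ((tabEquiv e he).symm ⟨a.1, a.2.1⟩).2⟩
      left_inv := ?_
      right_inv := ?_ }
  · refine (forall_cells e (fun i j => ((tabEquiv e he).symm ⟨a.1, a.2.1⟩).1 i j < k)).2 fun i => ?_
    have := tabOf_apply e he a.1 a.2.1 i
    change tabOf e he a.1 a.2.1 _ _ < k
    rw [this]; exact a.2.2 i
  · intro T
    apply Subtype.ext
    have h' := congrArg Subtype.val ((tabEquiv e he).symm_apply_apply ⟨T.1, T.2.2⟩)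
    exact h'
  · intro a
    apply Subtype.ext
    have h' := congrArg Subtype.val ((tabEquiv e he).apply_symm_apply ⟨a.1, a.2.1⟩)
    exact h'

theorem Dn_strict (c : ℕ → ℕ) (N : ℕ) : StrictMono (fun i : Fin (N + 1) => toLex (Dn c i, c i)) := by
  rw [Fin.strictMono_iff_lt_succ]
  intro i
  rw [lexStep]
  simp only [Fin.val_castSucc, Fin.val_succ, Dn_succ]
  exact le_rfl

theorem qy_iff {μ : YoungDiagram} {N : ℕ} (e : Fin (N + 1) ≃ μ.cells)
    (T : SemistandardYoungTableau μ) (hT : GoodL μ T e) :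
    IsQY μ T ↔ ∀ i : Fin (N + 1), T (e i).1.1 (e i).1.2 = Dn (colw e) i := by
  have hs := (good_iff e T).1 hT
  have hlex : ∀ i j, i ≤ j → T (e i).1.1 (e i).1.2 < T (e j).1.1 (e j).1.2 ∨
      (T (e i).1.1 (e i).1.2 = T (e j).1.1 (e j).1.2 ∧ (e i).1.2 ≤ (e j).1.2) := by
    intro i j h
    have := hs.monotone h
    simpa only [Prod.Lex.toLex_le_toLex, colw_fin] using this
  have hmem : ∀ i, ((e i).1.1, (e i).1.2) ∈ μ := fun i => by have := (e i).2; simpa using this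
  have hidx : ∀ i j, (i, j) ∈ μ → ∃ x, i = (e x).1.1 ∧ j = (e x).1.2 := fun i j h =>
    ⟨e.symm ⟨(i, j), by simpa using h⟩, by simp⟩
  generalize ha : (fun i => T (e i).1.1 (e i).1.2) = a at *
  have ha' : ∀ i, T (e i).1.1 (e i).1.2 = a i := fun i => congrFun ha i
  simp only [ha'] at hs hlex ⊢
  have hstep : ∀ i : Fin N, a i.castSucc + (if colw e (i + 1) ≤ colw e i then 1 else 0) ≤ a i.succ := by
    intro i
    have := hs (Fin.castSucc_lt_succ (i := i))
    rw [lexStep] at this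
    simpa using this
  constructor
  · intro hq
    have hq' : ∀ x, 0 < a x → ∃ y z, a y = a x ∧ a z + 1 = a x ∧ (e y).1.2 ≤ (e z).1.2 := by
      intro x hx
      obtain ⟨i, j, i', j', h1, h2, h3, h4, h5⟩ := hq (a x) hx ⟨_, _, hmem x, ha' x⟩
      obtain ⟨y, rfl, rfl⟩ := hidx _ _ h1
      obtain ⟨z, rfl, rfl⟩ := hidx _ _ h2
      rw [ha'] at h3 h4
      exact ⟨y, z, h3, by omega, h5⟩
    intro i
    induction i using Fin.induction with
    | zero =>
      simp only [Fin.val_zero, Dn_zero]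
      by_contra h
      obtain ⟨y, z, h1, h2, h3⟩ := hq' 0 (by omega)
      have := hlex 0 z (Fin.zero_le _)
      omega
    | succ i ih =>
      have h0 := hstep i
      simp only [Fin.val_castSucc, Fin.val_succ, Dn_succ] at *
      rw [← ih]
      by_contra hne
      obtain ⟨y, z, h1, h2, h3⟩ := hq' i.succ (by omega)
      have hz : z ≤ i.castSucc := by
        by_contra hc
        have : i.succ ≤ z := by
          rw [Fin.le_def]; rw [Fin.le_def] at hc; simp at *; omega
        have := hlex _ _ this
        omega
      have e1 := hlex _ _ hz
      have h4 : a i.castSucc + 1 = a i.succ := by omega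
      have hy : i.succ ≤ y := by
        by_contra hc
        have : y ≤ i.castSucc := by
          rw [Fin.le_def]; rw [Fin.le_def] at hc; simp at *; omega
        have := hlex _ _ this
        omega
      have e2 := hlex _ _ hy
      have c1 := colw_fin e i.castSucc
      have c2 := colw_fin e i.succ
      simp only [Fin.val_castSucc, Fin.val_succ] at c1 c2
      rw [c1, c2] at h0 hne
      split_ifs at h0 hne <;> omega
  · intro hD v hv hex
    obtain ⟨i, j, h1, h2⟩ := hex
    obtain ⟨x, rfl, rfl⟩ := hidx _ _ h1
    rw [ha'] at h2
    clear h1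
    induction x using Fin.induction with
    | zero => rw [hD] at h2; simp [Dn_zero] at h2; omega
    | succ i ih =>
      by_cases hc : a i.castSucc = v
      · exact ih hc
      · have c1 := colw_fin e i.castSucc
        have c2 := colw_fin e i.succ
        simp only [Fin.val_castSucc, Fin.val_succ] at c1 c2
        have h3 := hD i.succ
        have h4 := hD i.castSucc
        simp only [Fin.val_castSucc, Fin.val_succ, Dn_succ] at h3 h4
        refine ⟨_, _, _, _, hmem i.succ, hmem i.castSucc, (ha' _).trans h2, (ha' _).trans ?_, ?_⟩
        · split_ifs at h3 <;> omega
        · rw [c1, c2] at h3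
          split_ifs at h3 <;> omega

theorem max_iff {μ : YoungDiagram} {N : ℕ} (e : Fin (N + 1) ≃ μ.cells)
    (T : SemistandardYoungTableau μ) (hT : ∀ i : Fin (N + 1), T (e i).1.1 (e i).1.2 = Dn (colw e) i) (m : ℕ) :
    MaxEq μ T m ↔ m = Dn (colw e) N + 1 := by
  unfold MaxEq EntryLE
  rw [forall_cells e (fun i j => T i j < m), exists_cells e (fun i j => T i j = m - 1)]
  simp only [hT]
  constructor
  · rintro ⟨h1, x, h2⟩
    have h3 := h1 (Fin.last N)
    have h4 := Dn_mono (colw e) (show (x : ℕ) ≤ N by omega)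
    simp at h3
    omega
  · rintro rfl
    refine ⟨fun i => ?_, Fin.last N, by simp⟩
    have h4 := Dn_mono (colw e) (show (i : ℕ) ≤ N by omega)
    omega

theorem fiber_qy {μ : YoungDiagram} {N : ℕ} (e : Fin (N + 1) ≃ μ.cells) (he : ExtL μ e) (m : ℕ) :
    Nat.card {T // (IsQY μ T ∧ MaxEq μ T m) ∧ GoodL μ T e} = if m = Dn (colw e) N + 1 then 1 else 0 := by
  split_ifs with h
  · rw [Nat.card_eq_one_iff_unique]
    constructor
    · constructor
      rintro ⟨T, ⟨h1, h2⟩, h3⟩ ⟨T', ⟨h1', h2'⟩, h3'⟩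
      apply Subtype.ext
      rw [qy_iff e T h3] at h1
      rw [qy_iff e T' h3'] at h1'
      have : (⟨T, h3⟩ : {T // GoodL μ T e}) = ⟨T', h3'⟩ := by
        apply (tabEquiv e he).injective
        apply Subtype.ext
        funext i
        exact (h1 i).trans (h1' i).symm
      have h' := congrArg Subtype.val this
      exact h'
    · have hs := Dn_strict (colw e) N
      have h1 := tabOf_apply e he _ hs
      have h2 : GoodL μ (tabOf e he _ hs) e := (good_iff e _).2 (by simpa only [h1] using hs)
      exact ⟨⟨tabOf e he _ hs, ⟨(qy_iff e _ h2).2 h1, (max_iff e _ h1 m).2 h⟩, h2⟩⟩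
  · rw [Nat.card_eq_zero]
    left
    constructor
    rintro ⟨T, ⟨h1, h2⟩, h3⟩
    rw [qy_iff e T h3] at h1
    exact h ((max_iff e T h1 m).1 h2)

theorem ssyt_qyt {μ : YoungDiagram} {N : ℕ} (hn : μ.cells.card = N + 1) (k : ℕ) :
    SSYTle μ k = ∑ m ∈ Finset.range (N + 1 + 1), QYTeq μ m * (N + 1 + k - m).choose (N + 1) := by
  classical
  have hQ : ∀ m, QYTeq μ m = ∑ e : {e : Fin (N + 1) ≃ μ.cells // ExtL μ e},
      if m = Dn (colw e.1) N + 1 then 1 else 0 := by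
    intro m
    unfold QYTeq
    have hf : Finite {T : SemistandardYoungTableau μ // IsQY μ T ∧ MaxEq μ T m} := by
      have := finite_le μ m
      exact Finite.of_injective (fun T => (⟨T.1, T.2.2.1⟩ : {T // EntryLE μ T m})) (by
        intro a b h; have h' := congrArg Subtype.val h; exact Subtype.ext h')
    rw [card_fiber hn _ hf]
    exact Finset.sum_congr rfl fun e _ => fiber_qy e.1 e.2 m
  unfold SSYTle
  rw [card_fiber hn _ (finite_le μ k), Finset.sum_congr rfl fun e _ => fiber_le e.1 e.2 k]
  simp only [hQ, Finset.sum_mul]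
  rw [Finset.sum_comm]
  refine Finset.sum_congr rfl fun e _ => ?_
  have := Dn_le (colw e.1) N
  rw [Finset.sum_eq_single (Dn (colw e.1) N + 1)]
  · rw [if_pos rfl, one_mul]; congr 1; omega
  · intro b _ hb; rw [if_neg hb, zero_mul]
  · intro h; exfalso; apply h; simp; omega
theorem sum_choose_Ico (a b j : ℕ) (h : a ≤ b) :
    ∑ s ∈ Finset.Ico a b, (s.choose j : ℤ) = (b.choose (j + 1) : ℤ) - (a.choose (j + 1) : ℤ) := by
  induction b, h using Nat.le_induction with
  | base => simp
  | succ b h ih => rw [Finset.sum_Ico_succ_top h, ih, Nat.choose_succ_succ]; push_cast; ring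

/-- binomial matrix -/
def chM {k : ℕ} (r : Fin k → ℕ) : Matrix (Fin k) (Fin k) ℤ := Matrix.of fun i j => ((r i).choose j : ℤ)

theorem det_branch {k : ℕ} (r : Fin (k + 1) → ℕ) (hr : ∀ i : Fin k, r i.castSucc ≤ r i.succ) :
    ∑ s ∈ Fintype.piFinset (fun i : Fin k => Finset.Ico (r i.castSucc) (r i.succ)), (chM s).det =
      (chM r).det := by
  have h1 := MultilinearMap.map_sum_finset
    (Matrix.detRowAlternating (n := Fin k) (R := ℤ)).toMultilinearMap
    (fun (_ : Fin k) (s : ℕ) => (fun j : Fin k => (s.choose j : ℤ)))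
    (fun i : Fin k => Finset.Ico (r i.castSucc) (r i.succ))
  have h2 : ∑ s ∈ Fintype.piFinset (fun i : Fin k => Finset.Ico (r i.castSucc) (r i.succ)), (chM s).det
    = Matrix.det (Matrix.of fun i j : Fin k => ((r i.succ).choose (j + 1) : ℤ) - ((r i.castSucc).choose (j + 1) : ℤ)) := by
    refine Eq.trans h1.symm ?_
    change Matrix.det _ = _
    congr 1
    ext i j
    simp only [Matrix.of_apply]
    rw [← sum_choose_Ico _ _ _ (hr i), Finset.sum_apply]
  rw [h2]
  let B : Matrix (Fin (k + 1)) (Fin (k + 1)) ℤ := Matrix.of fun i j =>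
    Fin.cases ((r 0).choose j : ℤ) (fun i : Fin k => ((r i.succ).choose j : ℤ) - ((r i.castSucc).choose j : ℤ)) i
  rw [Matrix.det_eq_of_forall_row_eq_smul_add_pred (A := chM r) (B := B) (fun _ => 1)
    (fun j => by simp [chM, B]) (fun i j => by simp [chM, B])]
  rw [Matrix.det_succ_column_zero, Fin.sum_univ_succ]
  rw [Finset.sum_eq_zero (fun i _ => by simp [B])]
  simp only [Fin.val_zero, pow_zero, one_mul, add_zero]
  rw [show B 0 0 = 1 by simp [B], one_mul]
  congr 1
  

theorem det_shift {k : ℕ} (r : Fin k → ℕ) (r' : Fin (k + 1) → ℕ) (h0 : r' 0 = 0)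
    (hs : ∀ i : Fin k, r' i.succ = r i + 1) :
    (chM r').det * (k.factorial : ℤ) = (chM r).det * ∏ i, ((r i : ℤ) + 1) := by
  have h1 : (chM r').det = Matrix.det (Matrix.of fun i j : Fin k => ((r i + 1).choose (j + 1) : ℤ)) := by
    rw [Matrix.det_succ_row_zero, Fin.sum_univ_succ]
    rw [Finset.sum_eq_zero (fun i _ => by simp [chM, h0])]
    simp only [Fin.val_zero, pow_zero, one_mul, add_zero]
    rw [show chM r' 0 0 = 1 by simp [chM], one_mul]
    congr 1
    ext i j
    simp [chM, hs]
  have h2 : (k.factorial : ℤ) = ∏ j : Fin k, ((j : ℤ) + 1) := by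
    rw [← Finset.prod_range_add_one_eq_factorial, ← Fin.prod_univ_eq_prod_range (fun x => x + 1)]
    push_cast; rfl
  rw [h1, h2, mul_comm, ← Matrix.det_mul_row, mul_comm, ← Matrix.det_mul_column]
  congr 1
  ext i j
  simp only [Matrix.of_apply, chM]
  have := Nat.add_one_mul_choose_eq (r i) j
  zify at this
  push_cast at this
  linear_combination -this

/-- the cells of T with entry less than k are those of ν -/
def ShT (μ ν : YoungDiagram) (T : SemistandardYoungTableau μ) (k : ℕ) : Prop :=
  ∀ i j, (i, j) ∈ μ → (T i j < k ↔ (i, j) ∈ ν)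

/-- restriction -/
def resT {μ ν : YoungDiagram} (hsub : ∀ i j, (i, j) ∈ ν → (i, j) ∈ μ) (T : SemistandardYoungTableau μ) :
    SemistandardYoungTableau ν where
  entry i j := if (i, j) ∈ ν then T i j else 0
  row_weak' := by
    intro i j1 j2 hj h
    rw [if_pos h, if_pos (ν.up_left_mem le_rfl hj.le h)]
    exact T.row_weak hj (hsub _ _ h)
  col_strict' := by
    intro i1 i2 j hi h
    rw [if_pos h, if_pos (ν.up_left_mem hi.le le_rfl h)]
    exact T.col_strict hi (hsub _ _ h)
  zeros' := fun h => if_neg h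

/-- extension -/
def extT {μ ν : YoungDiagram} (hsub : ∀ i j, (i, j) ∈ ν → (i, j) ∈ μ)
    (hint : ∀ i j, (i + 1, j) ∈ μ → (i, j) ∈ ν) (k : ℕ)
    (T : SemistandardYoungTableau ν) (hT : EntryLE ν T k) :
    SemistandardYoungTableau μ where
  entry i j := if (i, j) ∈ ν then T i j else if (i, j) ∈ μ then k else 0
  row_weak' := by
    intro i j1 j2 hj h
    by_cases h2 : (i, j2) ∈ ν
    · rw [if_pos h2, if_pos (ν.up_left_mem le_rfl hj.le h2)]
      exact T.row_weak hj h2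
    · rw [if_neg h2, if_pos h]
      split_ifs with h3 h4
      · exact (hT _ _ h3).le
      · exact le_rfl
      · exact Nat.zero_le _
  col_strict' := by
    intro i1 i2 j hi h
    have h1 : (i1, j) ∈ ν := hint _ _ (μ.up_left_mem hi le_rfl h)
    rw [if_pos h1]
    by_cases h2 : (i2, j) ∈ ν
    · rw [if_pos h2]; exact T.col_strict hi h2
    · rw [if_neg h2, if_pos h]; exact hT _ _ h1
  zeros' := by
    intro i j h
    rw [if_neg (fun h' => h (hsub _ _ h')), if_neg h]

theorem card_shape {μ ν : YoungDiagram} (hsub : ∀ i j, (i, j) ∈ ν → (i, j) ∈ μ)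
    (hint : ∀ i j, (i + 1, j) ∈ μ → (i, j) ∈ ν) (k : ℕ) :
    Nat.card {T // EntryLE μ T (k + 1) ∧ ShT μ ν T k} = SSYTle ν k := by
  unfold SSYTle
  refine Nat.card_congr
    { toFun := fun T => ⟨resT hsub T.1, ?_⟩
      invFun := fun T => ⟨extT hsub hint k T.1 T.2, ?_, ?_⟩
      left_inv := ?_
      right_inv := ?_ }
  · intro i j h
    change (if (i, j) ∈ ν then T.1 i j else 0) < k
    rw [if_pos h]
    exact (T.2.2 i j (hsub _ _ h)).2 h
  · intro i j h
    change (if (i, j) ∈ ν then T.1 i j else if (i, j) ∈ μ then k else 0) < k + 1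
    split_ifs with h1
    · exact (T.2 _ _ h1).trans (Nat.lt_succ_self k)
    · exact Nat.lt_succ_self k
  · intro i j h
    change (if (i, j) ∈ ν then T.1 i j else if (i, j) ∈ μ then k else 0) < k ↔ _
    split_ifs with h1
    · exact iff_of_true (T.2 _ _ h1) h1
    · exact iff_of_false (lt_irrefl k) h1
  · intro T
    apply Subtype.ext
    ext i j
    change (if (i, j) ∈ ν then (if (i, j) ∈ ν then T.1 i j else 0) else if (i, j) ∈ μ then k else 0) = T.1 i j
    split_ifs with h1 h2
    · rfl
    · have h3 := T.2.1 i j h2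
      have h4 := mt (T.2.2 i j h2).1 h1
      omega
    · exact (T.1.zeros h2).symm
  · intro T
    apply Subtype.ext
    ext i j
    change (if (i, j) ∈ ν then (if (i, j) ∈ ν then T.1 i j else if (i, j) ∈ μ then k else 0) else 0) = T.1 i j
    split_ifs with h1
    · rfl
    · exact (T.1.zeros h1).symm

/-- shifted reversed row lengths -/
def rr (k : ℕ) (μ : YoungDiagram) (i : Fin k) : ℕ := μ.rowLen (k - 1 - i) + i

theorem rowLen_eq_of {ν : YoungDiagram} {q x : ℕ} (h : ∀ j, (q, j) ∈ ν ↔ j < x) : ν.rowLen q = x := by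
  apply le_antisymm
  · by_contra hc
    have := (h x).1 (YoungDiagram.mem_iff_lt_rowLen.2 (by omega))
    omega
  · by_contra hc
    have := YoungDiagram.mem_iff_lt_rowLen.1 ((h (ν.rowLen q)).2 (by omega))
    omega

theorem exists_diag {k : ℕ} (μ : YoungDiagram) (s : Fin k → ℕ)
    (hs : s ∈ Fintype.piFinset (fun i : Fin k => Finset.Ico (rr (k + 1) μ i.castSucc) (rr (k + 1) μ i.succ)))
    (hμ : μ.rowLen (k + 1) = 0) :
    ∃ ν : YoungDiagram, (∀ i j, (i, j) ∈ ν → (i, j) ∈ μ) ∧ (∀ i j, (i + 1, j) ∈ μ → (i, j) ∈ ν) ∧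
      ν.rowLen k = 0 ∧ rr k ν = s := by
  rw [Fintype.mem_piFinset] at hs
  let g : ℕ → ℕ := fun q => if h : q < k then s ⟨k - 1 - q, by omega⟩ - (k - 1 - q) else 0
  have hg : ∀ (q : ℕ) (h : q < k), s ⟨k - 1 - q, by omega⟩ = g q + (k - 1 - q) ∧ μ.rowLen (q + 1) ≤ g q ∧ g q ≤ μ.rowLen q := by
    intro q h
    have := hs ⟨k - 1 - q, by omega⟩
    simp only [rr, Finset.mem_Ico, Fin.val_castSucc, Fin.val_succ] at this
    rw [show k + 1 - 1 - (k - 1 - q) = q + 1 by omega, show k + 1 - 1 - (k - 1 - q + 1) = q by omega] at this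
    simp only [g, dif_pos h]
    omega
  have hg0 : ∀ q, k ≤ q → g q = 0 := fun q h => by simp only [g]; rw [dif_neg (by omega)]
  have h0 : ∀ q, k + 1 ≤ q → μ.rowLen q = 0 := fun q h => by
    have := μ.rowLen_anti _ _ h; omega
  have hgu : ∀ q, g q ≤ μ.rowLen q := fun q => by
    by_cases h : q < k
    · exact (hg q h).2.2
    · rw [hg0 q (by omega)]; omega
  have hgl : ∀ q, μ.rowLen (q + 1) ≤ g q := fun q => by
    by_cases h : q < k
    · exact (hg q h).2.1
    · rw [h0 (q + 1) (by omega)]; omega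
  have hga : Antitone g := antitone_nat_of_succ_le fun q => (hgu _).trans (hgl q)
  let ν : YoungDiagram := ⟨μ.cells.filter (fun p => p.2 < g p.1), by
    intro p p' hle hp
    simp only [Finset.coe_filter, Set.mem_setOf_eq, YoungDiagram.mem_cells] at hp ⊢
    refine ⟨?_, ?_⟩
    · exact μ.up_left_mem hle.1 hle.2 hp.1
    · exact lt_of_le_of_lt hle.2 (lt_of_lt_of_le hp.2 (hga hle.1))⟩
  have hν : ∀ q j, (q, j) ∈ ν ↔ j < g q := by
    intro q j
    rw [← YoungDiagram.mem_cells]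
    simp only [ν, Finset.mem_filter, YoungDiagram.mem_cells]
    constructor
    · exact fun h => h.2
    · exact fun h => ⟨YoungDiagram.mem_iff_lt_rowLen.2 (lt_of_lt_of_le h (hgu q)), h⟩
  have hrow : ∀ q, ν.rowLen q = g q := fun q => rowLen_eq_of (hν q)
  refine ⟨ν, ?_, ?_, ?_, ?_⟩
  · intro i j h
    exact YoungDiagram.mem_iff_lt_rowLen.2 (lt_of_lt_of_le ((hν i j).1 h) (hgu i))
  · intro i j h
    exact (hν i j).2 (lt_of_lt_of_le (YoungDiagram.mem_iff_lt_rowLen.1 h) (hgl i))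
  · rw [hrow, hg0 k le_rfl]
  · funext i
    have h := (hg (k - 1 - i) (by omega)).1
    simp only [rr, hrow]
    have hi : k - 1 - (k - 1 - (i : ℕ)) = i := by omega
    simp only [hi] at h
    exact h.symm

theorem exists_shape {k : ℕ} (μ : YoungDiagram) (T : SemistandardYoungTableau μ) (hT : EntryLE μ T (k + 1)) :
    ∃ ν : YoungDiagram, ShT μ ν T k ∧ ν.rowLen k = 0 ∧
      rr k ν ∈ Fintype.piFinset (fun i : Fin k => Finset.Ico (rr (k + 1) μ i.castSucc) (rr (k + 1) μ i.succ)) := by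
  let ν : YoungDiagram := ⟨μ.cells.filter (fun p => T p.1 p.2 < k), by
    intro p p' hle hp
    simp only [Finset.coe_filter, Set.mem_setOf_eq, YoungDiagram.mem_cells] at hp ⊢
    refine ⟨μ.up_left_mem hle.1 hle.2 hp.1, ?_⟩
    refine lt_of_le_of_lt ?_ hp.2
    exact (T.row_weak_of_le hle.2 (μ.up_left_mem hle.1 le_rfl hp.1)).trans (T.col_weak hle.1 hp.1)⟩
  have hν : ∀ q j, (q, j) ∈ ν ↔ (q, j) ∈ μ ∧ T q j < k := by
    intro q j
    rw [← YoungDiagram.mem_cells]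
    simp only [ν, Finset.mem_filter, YoungDiagram.mem_cells]
  have hge : ∀ q j, (q, j) ∈ μ → q ≤ T q j := by
    intro q
    induction q with
    | zero => intros; omega
    | succ q ih =>
      intro j h
      have h1 := ih j (μ.up_left_mem (Nat.le_succ q) le_rfl h)
      have h2 := T.col_strict (Nat.lt_add_one q) h
      omega
  have hu : ∀ q, ν.rowLen q ≤ μ.rowLen q := by
    intro q
    by_contra hc
    have h1 : (q, μ.rowLen q) ∈ ν := YoungDiagram.mem_iff_lt_rowLen.2 (by omega)
    have h2 := YoungDiagram.mem_iff_lt_rowLen.1 ((hν _ _).1 h1).1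
    omega
  have hl : ∀ q, μ.rowLen (q + 1) ≤ ν.rowLen q := by
    intro q
    by_contra hc
    have h1 : (q + 1, ν.rowLen q) ∈ μ := YoungDiagram.mem_iff_lt_rowLen.2 (by omega)
    have h2 := T.col_strict (Nat.lt_add_one q) h1
    have h3 := hT _ _ h1
    have h4 := YoungDiagram.mem_iff_lt_rowLen.1 ((hν q (ν.rowLen q)).2 ⟨μ.up_left_mem (Nat.le_succ q) le_rfl h1, by omega⟩)
    omega
  refine ⟨ν, ?_, ?_, ?_⟩
  · intro i j h
    rw [hν]; tauto
  · by_contra hc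
    have h1 : (k, 0) ∈ ν := YoungDiagram.mem_iff_lt_rowLen.2 (by omega)
    have h2 := (hν _ _).1 h1
    have := hge _ _ h2.1
    omega
  · rw [Fintype.mem_piFinset]
    intro i
    have h1 := hu (k - 1 - i)
    have h2 := hl (k - 1 - i)
    have hi := i.2
    simp only [rr, Finset.mem_Ico, Fin.val_castSucc, Fin.val_succ]
    rw [show k + 1 - 1 - (i : ℕ) = k - 1 - i + 1 by omega, show k + 1 - 1 - ((i : ℕ) + 1) = k - 1 - i by omega]
    omega

theorem rr_inj {k : ℕ} {ν ν' : YoungDiagram} (h : ν.rowLen k = 0) (h' : ν'.rowLen k = 0)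
    (hr : rr k ν = rr k ν') : ν = ν' := by
  have : ∀ q, ν.rowLen q = ν'.rowLen q := by
    intro q
    by_cases hq : q < k
    · have := congrFun hr ⟨k - 1 - q, by omega⟩
      simp only [rr] at this
      rw [show k - 1 - (k - 1 - q) = q by omega] at this
      omega
    · have h1 := ν.rowLen_anti k q (by omega)
      have h2 := ν'.rowLen_anti k q (by omega)
      omega
  ext ⟨i, j⟩
  rw [YoungDiagram.mem_cells, YoungDiagram.mem_cells, YoungDiagram.mem_iff_lt_rowLen,
    YoungDiagram.mem_iff_lt_rowLen, this]

theorem shT_unique {k : ℕ} {μ ν ν' : YoungDiagram} {T : SemistandardYoungTableau μ}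
    (hsub : ∀ i j, (i, j) ∈ ν → (i, j) ∈ μ) (hsub' : ∀ i j, (i, j) ∈ ν' → (i, j) ∈ μ)
    (h : ShT μ ν T k) (h' : ShT μ ν' T k) : ν = ν' := by
  ext ⟨i, j⟩
  rw [YoungDiagram.mem_cells, YoungDiagram.mem_cells]
  constructor
  · intro hh
    exact (h' i j (hsub _ _ hh)).1 ((h i j (hsub _ _ hh)).2 hh)
  · intro hh
    exact (h i j (hsub' _ _ hh)).1 ((h' i j (hsub' _ _ hh)).2 hh)

theorem ssyt_det (k : ℕ) : ∀ μ : YoungDiagram, μ.rowLen k = 0 →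
    (SSYTle μ k : ℤ) = (chM (rr k μ)).det := by
  classical
  induction k with
  | zero =>
    intro μ hμ
    have hempty : ∀ i j, (i, j) ∉ μ := by
      intro i j h
      have h1 := YoungDiagram.mem_iff_lt_rowLen.1 h
      have h2 := μ.rowLen_anti 0 i (by omega)
      omega
    rw [Matrix.det_isEmpty]
    have : SSYTle μ 0 = 1 := by
      unfold SSYTle
      rw [Nat.card_eq_one_iff_unique]
      refine ⟨⟨?_⟩, ⟨⟨SemistandardYoungTableau.highestWeight μ, fun i j h => absurd h (hempty i j)⟩⟩⟩
      intro T T'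
      apply Subtype.ext
      ext i j
      rw [T.1.zeros (hempty i j), T'.1.zeros (hempty i j)]
    rw [this]; rfl
  | succ k ih =>
    intro μ hμ
    rw [← det_branch]
    · have hfin := finite_le μ (k + 1)
      choose D hD1 hD2 hD3 hD4 using fun s : {s : Fin k → ℕ // s ∈ Fintype.piFinset (fun i : Fin k =>
        Finset.Ico (rr (k + 1) μ i.castSucc) (rr (k + 1) μ i.succ))} => exists_diag μ s.1 s.2 hμ
      have key : SSYTle μ (k + 1) = ∑ s : {s : Fin k → ℕ // s ∈ Fintype.piFinset (fun i : Fin k =>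
        Finset.Ico (rr (k + 1) μ i.castSucc) (rr (k + 1) μ i.succ))}, SSYTle (D s) k := by
        rw [Finset.sum_congr rfl fun s _ => (card_shape (hD1 s) (hD2 s) k).symm]
        have : ∀ s, Finite {T // EntryLE μ T (k + 1) ∧ ShT μ (D s) T k} := fun s =>
          Finite.of_injective (fun T => (⟨T.1, T.2.1⟩ : {T // EntryLE μ T (k + 1)})) (by
            intro a b h; have h' := congrArg Subtype.val h; exact Subtype.ext h')
        rw [← Nat.card_sigma]
        unfold SSYTle
        symm
        refine Nat.card_congr (Equiv.ofBijective (fun x => ⟨x.2.1, x.2.2.1⟩) ⟨?_, ?_⟩)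
        · rintro ⟨s, T, h1, h2⟩ ⟨s', T', h1', h2'⟩ h
          have h3 : T = T' := congrArg Subtype.val h
          subst h3
          have h4 := shT_unique (hD1 s) (hD1 s') h2 h2'
          have h5 : s = s' := by
            apply Subtype.ext
            rw [← hD4 s, ← hD4 s', h4]
          subst h5
          rfl
        · rintro ⟨T, hT⟩
          obtain ⟨ν, h1, h2, h3⟩ := exists_shape μ T hT
          have h4 : D ⟨_, h3⟩ = ν := rr_inj (hD3 _) h2 (hD4 ⟨_, h3⟩)
          exact ⟨⟨⟨_, h3⟩, ⟨T, hT, by rw [h4]; exact h1⟩⟩, rfl⟩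
      rw [key, ← Finset.sum_coe_sort (Fintype.piFinset (fun i : Fin k => Finset.Ico (rr (k + 1) μ i.castSucc) (rr (k + 1) μ i.succ)))]
      push_cast
      refine Finset.sum_congr rfl fun s _ => ?_
      rw [ih _ (hD3 s), hD4 s]
    · intro i
      simp only [rr, Fin.val_castSucc, Fin.val_succ]
      have := μ.rowLen_anti (k + 1 - 1 - (i + 1)) (k + 1 - 1 - i) (by omega)
      omega

theorem ssyt_ratio (k : ℕ) (μ : YoungDiagram) (hμ : μ.rowLen k = 0) :
    SSYTle μ (k + 1) * k.factorial = SSYTle μ k * ∏ q ∈ Finset.range k, (μ.rowLen q + (k - q)) := by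
  have h1 := ssyt_det k μ hμ
  have h2 := ssyt_det (k + 1) μ (by have := μ.rowLen_anti k (k + 1) (by omega); omega)
  have h3 := det_shift (rr k μ) (rr (k + 1) μ) (by simp [rr, hμ]) (fun i => by
    simp only [rr, Fin.val_succ]
    rw [show k + 1 - 1 - ((i : ℕ) + 1) = k - 1 - i by omega]; omega)
  rw [← h1, ← h2] at h3
  have h4 : ∏ q ∈ Finset.range k, (μ.rowLen q + (k - q)) = ∏ i : Fin k, (rr k μ i + 1) := by
    rw [← Finset.prod_range_reflect, ← Fin.prod_univ_eq_prod_range (fun j => μ.rowLen (k - 1 - j) + (k - (k - 1 - j)))]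
    refine Finset.prod_congr rfl fun i _ => ?_
    simp only [rr]
    omega
  rw [h4]
  zify
  exact h3
theorem nanj (x p q r P : ℕ) (hP : P + r = p) (hr : r ≤ x) :
    x.choose p * (x - r).choose q =
      ∑ i ∈ Finset.range (q + 1), P.choose i * (q + r).choose (q - i) * (x + i).choose (p + q) := by
  have h1 : ∀ i ∈ Finset.range (q + 1), P.choose i * (q + r).choose (q - i) * (x + i).choose (p + q)
      = ∑ j ∈ Finset.range (q + 1), P.choose j * x.choose (p + q - j) *
        (if j ≤ i then (P - j).choose (i - j) * (q + r).choose (q - i) else 0) := by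
    intro i hi
    have hi' : i ≤ q := by simpa [Nat.lt_succ_iff] using hi
    rw [add_comm x i, Nat.add_choose_eq i x, Finset.Nat.sum_antidiagonal_eq_sum_range_succ_mk,
      Finset.mul_sum]
    have hsub : Finset.range (q + 1) ⊆ Finset.range (p + q).succ := by
      intro a; simp; omega
    rw [← Finset.sum_subset hsub]
    · refine Finset.sum_congr rfl fun j hj => ?_
      split_ifs with hji
      · have := Nat.choose_mul (n := P) hji
        linear_combination ((q + r).choose (q - i) * x.choose (p + q - j)) * this
      · rw [Nat.choose_eq_zero_of_lt (by omega : i < j)]; simp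
    · intro j _ hj
      have : q < j := by simpa [Nat.lt_succ_iff] using hj
      simp only []
      rw [Nat.choose_eq_zero_of_lt (by omega : i < j)]; simp
  rw [Finset.sum_congr rfl h1, Finset.sum_comm]
  have h2 : ∀ j ∈ Finset.range (q + 1), ∑ i ∈ Finset.range (q + 1), P.choose j * x.choose (p + q - j) *
        (if j ≤ i then (P - j).choose (i - j) * (q + r).choose (q - i) else 0) =
        x.choose p * (P.choose j * (x - p).choose (q - j)) := by
    intro j hj
    have hj' : j ≤ q := by simpa [Nat.lt_succ_iff] using hj
    by_cases hjP : P < j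
    · rw [Nat.choose_eq_zero_of_lt hjP]; simp
    rw [← Finset.mul_sum]
    have h3 : ∑ i ∈ Finset.range (q + 1), (if j ≤ i then (P - j).choose (i - j) * (q + r).choose (q - i) else 0) = (P - j + (q + r)).choose (q - j) := by
      rw [Nat.add_choose_eq, Finset.Nat.sum_antidiagonal_eq_sum_range_succ_mk]
      rw [show q + 1 = j + (q - j).succ by omega, Finset.sum_range_add]
      rw [Finset.sum_eq_zero, zero_add]
      · refine Finset.sum_congr rfl fun a ha => ?_
        have : a < (q-j).succ := by simpa using ha
        simp only [Nat.le_add_right, if_true, Nat.add_sub_cancel_left]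
        congr 2; omega
      · intro a ha
        rw [if_neg]; have := Finset.mem_range.1 ha; omega
    rw [h3]
    have h4 := Nat.choose_mul (n := x) (k := p + q - j) (s := p) (by omega)
    rw [show p + q - j - p = q - j by omega] at h4
    rw [show P - j + (q + r) = p + q - j by omega]
    have h5 : (p + q - j).choose (q - j) = (p + q - j).choose p := by
      rw [← Nat.choose_symm (by omega : p ≤ p + q - j)]; congr 1; omega
    rw [h5]
    linear_combination P.choose j * h4
  rw [Finset.sum_congr rfl h2, ← Finset.mul_sum]
  by_cases hx : x < p
  · rw [Nat.choose_eq_zero_of_lt hx]; simp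
  congr 1
  rw [show x - r = P + (x - p) by omega, Nat.add_choose_eq,
    Finset.Nat.sum_antidiagonal_eq_sum_range_succ_mk]

theorem triang (n : ℕ) (hn : 0 < n) (B : ℕ) (A G : ℕ → ℕ)
    (h : ∀ k, ∑ m ∈ Finset.range B, A m * (n + k - m).choose n =
      ∑ m ∈ Finset.range B, G m * (n + k - m).choose n) : ∀ m < B, A m = G m := by
  intro m
  induction m using Nat.strong_induction_on with
  | _ m ih =>
    intro hm
    have := h m
    have key : ∀ F : ℕ → ℕ, ∑ j ∈ Finset.range B, F j * (n + m - j).choose n =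
        ∑ j ∈ Finset.range m, F j * (n + m - j).choose n + F m := by
      intro F
      have hsub : Finset.range (m + 1) ⊆ Finset.range B := by
        intro a; simp; omega
      rw [← Finset.sum_subset hsub, Finset.sum_range_succ]
      · simp
      · intro j _ hj
        have : m < j := by simpa [Nat.lt_succ_iff] using hj
        rw [Nat.choose_eq_zero_of_lt (by omega)]; simp
    rw [key, key, Finset.sum_congr rfl (fun j hj => by
      have := Finset.mem_range.1 hj
      rw [ih j this (by omega)])] at this
    omega

/-- Final algebra. -/
theorem final_alg (l1 l2 h1 h2 n : ℕ) (hn : n + 4 = l1 + h1 + l2 + h2)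
    (hl2 : 2 ≤ l2) (hl : l2 ≤ l1) (hh2 : 2 ≤ h2) (hh : h2 ≤ h1)
    (Q S : ℕ → ℕ)
    (hQ : ∀ k, S k = ∑ m ∈ Finset.range (n + 1), Q m * (n + k - m).choose n)
    (hS0 : ∀ k < h1, S k = 0)
    (hS : ∀ k, h1 ≤ k → S (k + 1) * ((k + 2 - h2) * (k + 1 - h1)) = S k * ((l1 + k) * (l2 + k - 1)))
    (m : ℕ) (hm1 : h1 ≤ m) (hm2 : m ≤ h1 + h2 + l2 - 3) :
    (m - h2 + 1).choose (h1 - h2 + 1) * Q m =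
      (l1 + h2 - 2).choose (m - h1) * (l2 + h2 - 3).choose (m - h1) * S h1 := by
  obtain ⟨a, rfl⟩ : ∃ a, l2 = a + 2 := ⟨l2 - 2, by omega⟩
  obtain ⟨b, rfl⟩ : ∃ b, l1 = a + 2 + b := ⟨l1 - (a + 2), by omega⟩
  obtain ⟨c, rfl⟩ : ∃ c, h2 = c + 2 := ⟨h2 - 2, by omega⟩
  obtain ⟨d, rfl⟩ : ∃ d, h1 = c + 2 + d := ⟨h1 - (c + 2), by omega⟩
  have hP : ∀ k, S k * (a + c + d + 2).choose (a + c + 1) =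
      S (c + 2 + d) * ((k + a + b + 1).choose (a + b + c + d + 3) * (k + a).choose (a + c + 1)) := by
    intro k
    by_cases hk : k < c + 2 + d
    · rw [hS0 k hk, Nat.choose_eq_zero_of_lt (by omega : k + a + b + 1 < a + b + c + d + 3)]; simp
    · obtain ⟨j, rfl⟩ : ∃ j, k = c + 2 + d + j := ⟨k - (c + 2 + d), by omega⟩
      clear hk
      induction j with
      | zero =>
        rw [show c + 2 + d + 0 + a + b + 1 = a + b + c + d + 3 by omega,
          show c + 2 + d + 0 + a = a + c + d + 2 by omega]
        simp
      | succ j ih =>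
        have h := hS (c + 2 + d + j) (by omega)
        rw [show c + 2 + d + j + 2 - (c + 2) = d + j + 2 by omega,
          show c + 2 + d + j + 1 - (c + 2 + d) = j + 1 by omega,
          show a + 2 + (c + 2 + d + j) - 1 = a + c + d + j + 3 by omega] at h
        have e1 := Nat.choose_mul_succ_eq (c + 2 + d + j + a + b + 1) (a + b + c + d + 3)
        rw [show c + 2 + d + j + a + b + 1 + 1 - (a + b + c + d + 3) = j + 1 by omega] at e1
        have e2 := Nat.choose_mul_succ_eq (c + 2 + d + j + a) (a + c + 1)
        rw [show c + 2 + d + j + a + 1 - (a + c + 1) = d + j + 2 by omega] at e2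
        rw [show c + 2 + d + (j + 1) + a + b + 1 = c + 2 + d + j + a + b + 1 + 1 by omega,
          show c + 2 + d + (j + 1) + a = c + 2 + d + j + a + 1 by omega,
          show c + 2 + d + (j + 1) = c + 2 + d + j + 1 by omega]
        have hpos : 0 < (d + j + 2) * (j + 1) := by positivity
        apply Nat.eq_of_mul_eq_mul_right hpos
        generalize (c + 2 + d + j + a + b + 1 + 1).choose (a + b + c + d + 3) = X' at *
        generalize (c + 2 + d + j + a + b + 1).choose (a + b + c + d + 3) = X at *
        generalize (c + 2 + d + j + a + 1).choose (a + c + 1) = Y' at *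
        generalize (c + 2 + d + j + a).choose (a + c + 1) = Y at *
        generalize (a + c + d + 2).choose (a + c + 1) = Z at *
        generalize S (c + 2 + d + j + 1) = S1 at *
        generalize S (c + 2 + d + j) = S2 at *
        generalize S (c + 2 + d) = S3 at *
        zify at *
        linear_combination Z * h + ((a + 2 + b + (c + 2 + d + j) : ℤ) * (a + c + d + j + 3)) * ih
          + S3 * Y * (a + c + d + j + 3) * e1 + S3 * X' * (j + 1) * e2
  have hT := triang n (by omega) (n + 1) (fun m => Q m * (a + c + d + 2).choose (a + c + 1))
    (fun m => if c + 2 + d ≤ m ∧ m ≤ a + 2 * c + d + 3 then S (c + 2 + d) * ((a + c + d + 2).choose (m - c - 1) *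
      (a + b + c + 2).choose (m - (c + 2 + d))) else 0) (by
    intro k
    have e1 : ∑ m ∈ Finset.range (n + 1), Q m * (a + c + d + 2).choose (a + c + 1) * (n + k - m).choose n
        = S k * (a + c + d + 2).choose (a + c + 1) := by
      rw [hQ k, Finset.sum_mul]
      exact Finset.sum_congr rfl fun _ _ => by ring
    rw [e1, hP]
    have := nanj (k + a + b + 1) (a + b + c + d + 3) (a + c + 1) (b + 1) (a + c + d + 2) (by ring) (by omega)
    rw [show k + a + b + 1 - (b + 1) = k + a by omega] at this
    rw [this, Finset.mul_sum, ← Finset.sum_range_reflect]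
    have e2 : n + 1 = (c + 2 + d) + ((a + c + 1 + 1) + (a + b + 1)) := by omega
    conv_rhs => rw [e2, Finset.sum_range_add _ (c + 2 + d), Finset.sum_range_add _ (a + c + 1 + 1)]
    rw [Finset.sum_eq_zero (s := Finset.range (c + 2 + d)), Finset.sum_eq_zero (s := Finset.range (a + b + 1)), zero_add, add_zero]
    · refine Finset.sum_congr rfl fun i hi => ?_
      have hi := Finset.mem_range.1 hi
      rw [if_pos (by omega)]
      rw [← mul_assoc (S _)]
      congr 1
      rotate_left
      · congr 1 <;> omega
      rw [show a + c + 1 - (a + c + 1 + 1 - 1 - i) = c + 2 + d + i - (c + 2 + d) by omega,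
        show a + c + 1 + (b + 1) = a + b + c + 2 by omega]
      congr 2
      rw [← Nat.choose_symm (by omega)]; congr 1; omega
    · intro x hx
      rw [if_neg (by omega)]; simp
    · intro x hx
      have := Finset.mem_range.1 hx
      rw [if_neg (by omega)]; simp)
  have := hT m (by omega)
  beta_reduce at this
  rw [if_pos (by omega)] at this
  have e3 := Nat.choose_mul (n := a + c + d + 2) (k := m - c - 1) (s := d + 1) (by omega)
  rw [show m - (c + 2) + 1 = m - c - 1 by omega, show c + 2 + d - (c + 2) + 1 = d + 1 by omega,
    show a + 2 + b + (c + 2) - 2 = a + b + c + 2 by omega, show a + 2 + (c + 2) - 3 = a + c + 1 by omega]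
  rw [show a + c + d + 2 - (d + 1) = a + c + 1 by omega, show m - c - 1 - (d + 1) = m - (c + 2 + d) by omega] at e3
  have e4 : (a + c + d + 2).choose (d + 1) = (a + c + d + 2).choose (a + c + 1) := by
    rw [← Nat.choose_symm (by omega)]; congr 1; omega
  rw [e4] at e3
  have hpos : 0 < (a + c + d + 2).choose (a + c + 1) := Nat.choose_pos (by omega)
  apply Nat.eq_of_mul_eq_mul_right hpos
  linear_combination (m - c - 1).choose (d + 1) * this + S (c + 2 + d) * (a + b + c + 2).choose (m - (c + 2 + d)) * e3
theorem prod_shape (l1 l2 c d j : ℕ) (f : ℕ → ℕ) (h0 : f 0 = l1) (h1 : f 1 = l2) (hl2 : 2 ≤ l2)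
    (h2 : ∀ i, 2 ≤ i → i < c + 2 → f i = 2)
    (h3 : ∀ i, c + 2 ≤ i → i < c + 2 + d → f i = 1)
    (h4 : ∀ i, c + 2 + d ≤ i → f i = 0) :
    (∏ q ∈ Finset.range (c + 2 + d + j), (f q + (c + 2 + d + j - q))) * ((d + j + 2) * (j + 1)) =
      ((l1 + (c + 2 + d + j)) * (l2 + (c + 2 + d + j) - 1)) * (c + 2 + d + j).factorial := by
  have e : Finset.range (c + 2 + d + j) = Finset.range (2 + (c + (d + j))) := by congr 1; ring
  rw [e, Finset.prod_range_add, Finset.prod_range_add, Finset.prod_range_add]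
  have p1 : ∏ x ∈ Finset.range c, (f (2 + x) + (c + 2 + d + j - (2 + x))) = (c + 2 + d + j).descFactorial c := by
    rw [Nat.descFactorial_eq_prod_range]
    refine Finset.prod_congr rfl fun x hx => ?_
    have := Finset.mem_range.1 hx
    rw [h2 _ (by omega) (by omega)]; omega
  have p2 : ∏ x ∈ Finset.range d, (f (2 + (c + x)) + (c + 2 + d + j - (2 + (c + x)))) = (d + j + 1).descFactorial d := by
    rw [Nat.descFactorial_eq_prod_range]
    refine Finset.prod_congr rfl fun x hx => ?_
    have := Finset.mem_range.1 hx
    rw [h3 _ (by omega) (by omega)]; omega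
  have p3 : ∏ x ∈ Finset.range j, (f (2 + (c + (d + x))) + (c + 2 + d + j - (2 + (c + (d + x))))) = j.descFactorial j := by
    rw [Nat.descFactorial_eq_prod_range]
    refine Finset.prod_congr rfl fun x hx => ?_
    have := Finset.mem_range.1 hx
    rw [h4 _ (by omega)]; omega
  rw [p1, p2, p3, Finset.prod_range_succ, Finset.prod_range_one, h0, h1, Nat.descFactorial_self]
  have q1 := Nat.factorial_mul_descFactorial (show c ≤ c + 2 + d + j by omega)
  have q2 := Nat.factorial_mul_descFactorial (show d ≤ d + j + 1 by omega)
  rw [show c + 2 + d + j - c = d + j + 1 + 1 by omega, Nat.factorial_succ] at q1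
  rw [show d + j + 1 - d = j + 1 by omega, Nat.factorial_succ] at q2
  rw [← q1, ← q2, show l2 + (c + 2 + d + j) - 1 = l2 + (c + 2 + d + j - 1) by omega]
  simp only [Nat.sub_zero]
  ring

theorem card_shape_rows (l1 l2 c d : ℕ) (μ : YoungDiagram) (hμ : HasRows2 μ l1 l2 (c + 2 + d) (c + 2)) :
    μ.cells.card = l1 + l2 + 2 * c + d := by
  obtain ⟨h0, h1, h2, h3, h4⟩ := hμ
  have : μ.cells.card = ∑ i ∈ Finset.range (c + 2 + d), μ.rowLen i := by
    rw [Finset.card_eq_sum_card_fiberwise (f := Prod.fst) (t := Finset.range (c + 2 + d))]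
    · refine Finset.sum_congr rfl fun i _ => ?_
      rw [YoungDiagram.rowLen_eq_card]
      rfl
    · rintro ⟨i, j⟩ h
      have h5 := YoungDiagram.mem_iff_lt_rowLen.1 ((μ.mem_cells _).1 h)
      simp only [Finset.coe_range, Set.mem_Iio]
      by_contra hc
      rw [h4 i (by omega)] at h5
      omega
  rw [this, show c + 2 + d = 2 + (c + d) by ring, Finset.sum_range_add, Finset.sum_range_add]
  rw [Finset.sum_range_succ, Finset.sum_range_one, h0, h1]
  rw [Finset.sum_congr rfl (fun x hx => h2 (2 + x) (by omega) (by have := Finset.mem_range.1 hx; omega)),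
    Finset.sum_congr rfl (fun x hx => h3 (2 + (c + x)) (by omega) (by have := Finset.mem_range.1 hx; omega))]
  simp
  ring

theorem ssyt_zero (μ : YoungDiagram) (h k : ℕ) (hk : k < h) (hpos : 0 < μ.rowLen (h - 1)) : SSYTle μ k = 0 := by
  unfold SSYTle
  rw [Nat.card_eq_zero]
  left
  constructor
  rintro ⟨T, hT⟩
  have hge : ∀ q j, (q, j) ∈ μ → q ≤ T q j := by
    intro q
    induction q with
    | zero => intros; omega
    | succ q ih =>
      intro j h
      have h1 := ih j (μ.up_left_mem (Nat.le_succ q) le_rfl h)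
      have h2 := T.col_strict (Nat.lt_add_one q) h
      omega
  have h1 : (h - 1, 0) ∈ μ := YoungDiagram.mem_iff_lt_rowLen.2 hpos
  have := hge _ _ h1
  have := hT _ _ h1
  omega

/-- the identity
`C(m-h₂+1, h₁-h₂+1) · QYT_{=m}(λ) = C(λ₁+h₂-2, m-h₁) · C(λ₂+h₂-3, m-h₁) · SSYT_{h₁}(λ)`
for `λ = (λ₁, λ₂, 2^{h₂-2}, 1^{h₁-h₂})`. -/
theorem qyt_ssyt_identity_one (l1 l2 h1 h2 m : ℕ)
    (hl2 : 2 ≤ l2) (hl : l2 ≤ l1) (hh2 : 2 ≤ h2) (hh : h2 ≤ h1)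
    (hm1 : h1 ≤ m) (hm2 : m ≤ h1 + h2 + l2 - 3)
    (μ : YoungDiagram) (hμ : HasRows2 μ l1 l2 h1 h2) :
    (m - h2 + 1).choose (h1 - h2 + 1) * QYTeq μ m =
      (l1 + h2 - 2).choose (m - h1) * (l2 + h2 - 3).choose (m - h1) * SSYTle μ h1 := by
  obtain ⟨c, rfl⟩ : ∃ c, h2 = c + 2 := ⟨h2 - 2, by omega⟩
  obtain ⟨d, rfl⟩ : ∃ d, h1 = c + 2 + d := ⟨h1 - (c + 2), by omega⟩
  have hcard := card_shape_rows l1 l2 c d μ hμ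
  obtain ⟨N, hN⟩ : ∃ N, l1 + l2 + 2 * c + d = N + 1 := ⟨l1 + l2 + 2 * c + d - 1, by omega⟩
  obtain ⟨r0, r1, r2, r3, r4⟩ := hμ
  refine final_alg l1 l2 (c + 2 + d) (c + 2) (N + 1) (by omega) hl2 hl hh2 hh (QYTeq μ) (SSYTle μ)
    (ssyt_qyt (hcard.trans hN)) ?_ ?_ m hm1 hm2
  · intro k hk
    refine ssyt_zero μ (c + 2 + d) k hk ?_
    rcases Nat.eq_zero_or_pos d with rfl | hd
    · rcases Nat.eq_zero_or_pos c with rfl | hc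
      · simp only [Nat.zero_add, Nat.add_zero, Nat.reduceSub]; omega
      · rw [r2 _ (by omega) (by omega)]; omega
    · rw [r3 _ (by omega) (by omega)]; omega
  · intro k hk
    obtain ⟨j, rfl⟩ : ∃ j, k = c + 2 + d + j := ⟨k - (c + 2 + d), by omega⟩
    have e1 := ssyt_ratio (c + 2 + d + j) μ (r4 _ (by omega))
    have e2 := prod_shape l1 l2 c d j μ.rowLen r0 r1 hl2 r2 r3 r4
    rw [show c + 2 + d + j + 2 - (c + 2) = d + j + 2 by omega,
      show c + 2 + d + j + 1 - (c + 2 + d) = j + 1 by omega]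
    apply Nat.eq_of_mul_eq_mul_right (Nat.factorial_pos (c + 2 + d + j))
    generalize SSYTle μ (c + 2 + d + j + 1) = S1 at *
    generalize SSYTle μ (c + 2 + d + j) = S2 at *
    calc _ = S1 * (c + 2 + d + j).factorial * ((d + j + 2) * (j + 1)) := by ring
      _ = _ := by rw [e1, mul_assoc, e2]; ring
end
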